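/- arXiv:1711.03655 — 2 statements merged into one kernel-verified Lean document; each statement's English description precedes it below -/
import Mathlib

section
/- Let A be an equidimensional complete local ring containing a field of dimension d ≥ 2, with separably closed residue field. Then for all 0 ≤ t ≤ d−2, the maximum over closed subsets X ⊆ Spec(A) with dim(X) ≤ t of the number of connected components of Spec(A) \ X is at most 1 + Σ_{i=0}^{t} λ_{i,i+1}(A). -/
open IsLocalRing PrimeSpectrum CategoryTheory

noncomputable section

universe u

/-- The connectedness dimension of `A`: the minimal dimension of a closed subset
`Z = V(J)` of `Spec A` such that `Spec A \ Z` is disconnected (the empty space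
counting as disconnected). -/
noncomputable def connDim (A : Type*) [CommRing A] : WithBot ℕ∞ :=
  sInf {d | ∃ J : Ideal A, ringKrullDim (A ⧸ J) = d ∧
    ¬ IsConnected ((PrimeSpectrum.zeroLocus (J : Set A))ᶜ)}

/-- The module `Ext^i_R(k, H^{n-j}_I(R))` whose dimension over the residue field
`k` of `R` is the Lyubeznik number `λ_{i,j}` of `R/I`. -/
noncomputable def lyubeznikModule (R : Type u) [CommRing R] [IsLocalRing R]
    (I : Ideal R) (n i j : ℕ) : ModuleCat.{u} R :=
  ((_root_.Ext R (ModuleCat.{u} R) i).obj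
    (Opposite.op (ModuleCat.of R (ResidueField R)))).obj
    ((localCohomology I (n - j)).obj (ModuleCat.of R R))

/-- The Lyubeznik number `λ_{i,j}` of `R/I`, i.e. the dimension of
`Ext^i_R(k, H^{n-j}_I(R))` as a vector space over the residue field `k`, encoded as
the Krull dimension of its lattice of `R`-submodules (which agrees with the length
of the module, hence with the `k`-dimension, since the module is annihilated by the
maximal ideal). -/
noncomputable def lyubeznikNumber (R : Type u) [CommRing R] [IsLocalRing R]
    (I : Ideal R) (n i j : ℕ) : WithBot ℕ∞ :=
  Order.krullDim (Submodule R (lyubeznikModule R I n i j))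

/-- `A` contains a field. -/
def ContainsField (A : Type*) [CommRing A] : Prop := ∃ F : Subring A, IsField F

/-- `R` is a regular local ring: Noetherian, local, and the maximal ideal is
generated by `dim R` elements. -/
def IsRegularLocal (R : Type*) [CommRing R] [IsLocalRing R] [IsNoetherianRing R] : Prop :=
  ∃ s : Finset R, Ideal.span (s : Set R) = maximalIdeal R ∧
    ringKrullDim R = (s.card : ℕ)

/-!
Resolve the regular ring `R` by injectives, with cosyzygies `Z^q`, and let `k` be its residue
field. The proof follows the invariant `ℓ(J) = length Ext^{t+2}(k, Γ_J(Z^{n-t-2}))` of an ideal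
`J` of `R`.

* Splitting the complex `Γ_I(E^•)` into short exact sequences and using `length Ext^n(k, R) ≤ 1`
  gives `ℓ(I) ≤ 1 + Σ_{i ≤ t} λ_{i,i+1}`.
* `ℓ(J) ≥ 1` as soon as some `P ⊇ J` has `dim R/P ≥ t + 2`.
* If `dim R/(J + J') ≤ t`, then `H^q_{J+J'}(R) = 0` for `q < n - t`, and Mayer–Vietoris gives
  `ℓ(J) + ℓ(J') ≤ ℓ(J ∩ J')`.

Now let `V(J)` have dimension at most `t`. The ideals of the closures of the connected components
of `Spec A \ V(J)` meet in the nilradical of `A`, and the sum of any two of them contains `J` up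
to radical. Applying the three facts to their preimages in `R` shows that the number of components
is at most `ℓ(I)`.
-/

/-! ### Cosyzygies and dimension shifting -/

section Cosyzygy

open Abelian Limits

universe v w

variable {C : Type*} [Category.{v} C] [Abelian C] [EnoughInjectives C]

/-- The `q`-th cosyzygy of `M` in the injective resolution built from the chosen injective
objects `Injective.under`. -/
def cosyzygy (M : C) : ℕ → C
  | 0 => M
  | q + 1 => cokernel (Injective.ι (cosyzygy M q))

/-- The projection `E^q → Z^{q+1}` from the chosen injective object containing `Z^q`. -/
def cosyzygyπ (M : C) (q : ℕ) : Injective.under (cosyzygy M q) ⟶ cosyzygy M (q + 1) :=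
  cokernel.π (Injective.ι (cosyzygy M q))

/-- The short exact sequence `0 → Z^q → E^q → Z^{q+1} → 0` linking consecutive cosyzygies. -/
abbrev cosyzygyShortComplex (M : C) (q : ℕ) : ShortComplex C :=
  ShortComplex.mk (Injective.ι (cosyzygy M q)) (cosyzygyπ M q) (cokernel.condition _)

lemma cosyzygyShortComplex_shortExact (M : C) (q : ℕ) :
    (cosyzygyShortComplex M q).ShortExact where
  exact := ShortComplex.exact_of_g_is_cokernel _
    (cokernelIsCokernel (Injective.ι (cosyzygy M q)))
  mono_f := Injective.ι_mono (cosyzygy M q)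
  epi_g := inferInstanceAs (Epi (cokernel.π (Injective.ι (cosyzygy M q))))

variable [HasExt.{w} C]

/-- The Yoneda product of the classes of the sequences `0 → Z^p → E^p → Z^{p+1} → 0` for
`p < q`; composing with it is dimension shifting. -/
def cosyzygyExtClass (M : C) : (q : ℕ) → Ext.{w} (cosyzygy M q) M q
  | 0 => Ext.mk₀ (𝟙 M)
  | q + 1 => (cosyzygyShortComplex_shortExact M q).extClass.comp (cosyzygyExtClass M q)
      (add_comm 1 q)

lemma comp_cosyzygyExtClass_zero {L M : C} {i : ℕ} (y : Ext.{w} L (cosyzygy M 0) i) :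
    y.comp (cosyzygyExtClass M 0) (add_zero i) = y :=
  Ext.comp_mk₀_id y

lemma comp_cosyzygyExtClass_succ {L M : C} {q i j : ℕ} (h : i + (q + 1) = j)
    (y : Ext.{w} L (cosyzygy M (q + 1)) i) :
    y.comp (cosyzygyExtClass M (q + 1)) h =
      (y.comp (cosyzygyShortComplex_shortExact M q).extClass rfl).comp (cosyzygyExtClass M q)
        (by omega) :=
  (Ext.comp_assoc y _ _ rfl _ (by omega)).symm

lemma exists_comp_cosyzygyExtClass_eq {L M : C} {q i j : ℕ} (h : i + q = j)
    (x : Ext.{w} L M j) :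
    ∃ y : Ext.{w} L (cosyzygy M q) i, y.comp (cosyzygyExtClass M q) h = x := by
  induction q generalizing i j with
  | zero =>
    obtain rfl : i = j := h
    exact ⟨x, comp_cosyzygyExtClass_zero x⟩
  | succ q ih =>
    obtain ⟨y, hy⟩ := ih (i := i + 1) (by omega) x
    obtain ⟨z, hz⟩ := Ext.covariant_sequence_exact₁ L (cosyzygyShortComplex_shortExact M q) y
      (Ext.eq_zero_of_injective _) rfl
    exact ⟨z, by rw [comp_cosyzygyExtClass_succ, hz, hy]⟩

lemma eq_zero_of_comp_cosyzygyExtClass_eq_zero {L M : C} {q i j : ℕ} (h : i + 1 + q = j)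
    {y : Ext.{w} L (cosyzygy M q) (i + 1)} (hy : y.comp (cosyzygyExtClass M q) h = 0) :
    y = 0 := by
  induction q generalizing i j with
  | zero =>
    obtain rfl : i + 1 = j := h
    rwa [comp_cosyzygyExtClass_zero] at hy
  | succ q ih =>
    rw [comp_cosyzygyExtClass_succ] at hy
    obtain ⟨w, rfl⟩ := Ext.covariant_sequence_exact₃ L (cosyzygyShortComplex_shortExact M q) y rfl
      (ih _ hy)
    rw [Ext.eq_zero_of_injective w, Ext.zero_comp]

lemma mk₀_comp_cosyzygyExtClass_succ_eq_zero_iff {L M : C} {q : ℕ}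
    (z : L ⟶ cosyzygy M (q + 1)) :
    (Ext.mk₀ z).comp (cosyzygyExtClass.{v, w} M (q + 1)) (zero_add _) = 0 ↔
      ∃ w : L ⟶ Injective.under (cosyzygy M q), w ≫ cosyzygyπ M q = z := by
  have hZ := cosyzygyShortComplex_shortExact M q
  rw [comp_cosyzygyExtClass_succ]
  constructor
  · intro hz
    obtain ⟨w, hw⟩ := Ext.covariant_sequence_exact₃ L hZ (Ext.mk₀ z) rfl
      (eq_zero_of_comp_cosyzygyExtClass_eq_zero _ hz)
    obtain ⟨w, rfl⟩ := (Ext.mk₀_bijective _ _).2 w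
    exact ⟨w, (Ext.mk₀_bijective _ _).1 (by rw [← hw, ← Ext.mk₀_comp_mk₀])⟩
  · rintro ⟨w, rfl⟩
    rw [← Ext.mk₀_comp_mk₀, Ext.comp_assoc_of_second_deg_zero, hZ.comp_extClass, Ext.comp_zero,
      Ext.zero_comp]

end Cosyzygy

/-! ### Torsion with respect to an ideal -/

section IdealTorsion

variable {R : Type*} [CommRing R]

/-- The submodule `Γ_I(M)` of elements annihilated by some power of each element of `I`. Over a
Noetherian ring these are the elements annihilated by some power of `I`. -/
def idealTorsion (I : Ideal R) (M : Type*) [AddCommGroup M] [Module R M] : Submodule R M where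
  carrier := {x | I ≤ (Ideal.torsionOf R M x).radical}
  add_mem' {x y} hx hy := by
    have hxy : Ideal.torsionOf R M x ⊓ Ideal.torsionOf R M y ≤ Ideal.torsionOf R M (x + y) := by
      rintro a ⟨hax : a • x = 0, hay : a • y = 0⟩
      rw [Ideal.mem_torsionOf_iff, smul_add, hax, hay, add_zero]
    exact (le_inf hx hy).trans ((Ideal.radical_inf _ _).ge.trans (Ideal.radical_mono hxy))
  zero_mem' := by simp [Ideal.radical_top]
  smul_mem' c x hx := by
    refine hx.trans (Ideal.radical_mono fun a ha ↦ ?_)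
    rw [Ideal.mem_torsionOf_iff] at ha ⊢
    rw [smul_comm, ha, smul_zero]

variable {M N : Type*} [AddCommGroup M] [Module R M] [AddCommGroup N] [Module R N]

lemma mem_idealTorsion {I : Ideal R} {x : M} :
    x ∈ idealTorsion I M ↔ I ≤ (Ideal.torsionOf R M x).radical :=
  Iff.rfl

lemma idealTorsion_sup (I J : Ideal R) :
    idealTorsion (I ⊔ J) M = idealTorsion I M ⊓ idealTorsion J M := by
  ext x
  simp [mem_idealTorsion]

lemma idealTorsion_le_of_le_radical {I J : Ideal R} (h : I ≤ J.radical) :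
    idealTorsion J M ≤ idealTorsion I M :=
  fun _ hx ↦ h.trans (Ideal.radical_le_radical_iff.2 hx)

lemma idealTorsion_eq_of_radical_eq {I J : Ideal R} (h : I.radical = J.radical) :
    idealTorsion I M = idealTorsion J M :=
  (idealTorsion_le_of_le_radical (Ideal.radical_le_radical_iff.1 h.ge)).antisymm
    (idealTorsion_le_of_le_radical (Ideal.radical_le_radical_iff.1 h.le))

lemma mem_idealTorsion_of_pow {I : Ideal R} {x : M} (s : ℕ) (h : ∀ a ∈ I ^ s, a • x = 0) :
    x ∈ idealTorsion I M :=
  fun _ ha ↦ ⟨s, h _ (Ideal.pow_mem_pow ha s)⟩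

lemma exists_pow_smul_eq_zero_of_mem_idealTorsion [IsNoetherianRing R] {I : Ideal R} {x : M}
    (h : x ∈ idealTorsion I M) : ∃ s, ∀ a ∈ I ^ s, a • x = 0 :=
  Ideal.exists_pow_le_of_le_radical_of_fg h (IsNoetherian.noetherian I)

lemma map_mem_idealTorsion {I : Ideal R} (f : M →ₗ[R] N) {x : M} (h : x ∈ idealTorsion I M) :
    f x ∈ idealTorsion I N := by
  refine h.trans (Ideal.radical_mono fun a ha ↦ ?_)
  rw [Ideal.mem_torsionOf_iff] at ha ⊢
  rw [← map_smul, ha, map_zero]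

lemma mem_idealTorsion_of_map {I : Ideal R} {f : M →ₗ[R] N} (hf : Function.Injective f) {x : M}
    (h : f x ∈ idealTorsion I N) : x ∈ idealTorsion I M := by
  refine h.trans (Ideal.radical_mono fun a ha ↦ ?_)
  rw [Ideal.mem_torsionOf_iff] at ha ⊢
  exact hf (by rw [map_smul, ha, map_zero])

/-- The map `Γ_I(M) → Γ_I(N)` induced by a linear map `M → N`. -/
def idealTorsionMap (I : Ideal R) (f : M →ₗ[R] N) : idealTorsion I M →ₗ[R] idealTorsion I N :=
  f.restrict fun _ h ↦ map_mem_idealTorsion f h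

lemma idealTorsionMap_injective (I : Ideal R) {f : M →ₗ[R] N} (hf : Function.Injective f) :
    Function.Injective (idealTorsionMap I f) :=
  fun _ _ hxy ↦ Subtype.ext (hf (congrArg Subtype.val hxy))

lemma exact_idealTorsionMap (I : Ideal R) {P : Type*} [AddCommGroup P] [Module R P]
    {f : M →ₗ[R] N} {g : N →ₗ[R] P} (hf : Function.Injective f) (hfg : Function.Exact f g) :
    Function.Exact (idealTorsionMap I f) (idealTorsionMap I g) := by
  rintro ⟨x, hx⟩
  constructor
  · intro h
    obtain ⟨y, rfl⟩ := (hfg x).1 (congrArg Subtype.val h)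
    exact ⟨⟨y, mem_idealTorsion_of_map hf hx⟩, rfl⟩
  · rintro ⟨y, hy⟩
    exact Subtype.ext ((hfg x).2 ⟨y, congrArg Subtype.val hy⟩)

lemma le_radical_annihilator_of_le_idealTorsion {I : Ideal R} {N : Submodule R M} (hN : N.FG)
    (h : N ≤ idealTorsion I M) : I ≤ N.annihilator.radical := by
  induction N, hN using Submodule.fg_induction with
  | singleton x =>
    refine (mem_idealTorsion.1 (h (Submodule.mem_span_singleton_self x))).trans
      (Ideal.radical_mono fun a ha ↦ ?_)
    rwa [Submodule.mem_annihilator_span_singleton]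
  | sup N₁ N₂ _ _ h₁ h₂ =>
    rw [Submodule.annihilator_sup, Ideal.radical_inf]
    exact le_inf (h₁ (le_sup_left.trans h)) (h₂ (le_sup_right.trans h))

lemma exists_pow_inf_le_pow_mul [IsNoetherianRing R] (I J : Ideal R) (s : ℕ) :
    ∃ m, I ^ m ⊓ J ≤ I ^ s * J := by
  obtain ⟨k, hk⟩ := Ideal.exists_pow_inf_eq_pow_smul I (M := R) J
  refine ⟨k + s, ?_⟩
  have hks := hk (k + s) (Nat.le_add_right k s)
  rw [Nat.add_sub_cancel_left, smul_eq_mul, Ideal.mul_top] at hks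
  rw [hks, smul_eq_mul]
  exact Ideal.mul_mono_right inf_le_right

lemma exists_linearMap_extending_pair (hM : Module.Baer R M) (f g : R →ₗ.[R] M)
    (hfg : ∀ (x : f.domain) (y : g.domain), (x : R) = y → f x = g y) :
    ∃ φ : R →ₗ[R] M, (∀ x : f.domain, φ x = f x) ∧ ∀ y : g.domain, φ y = g y := by
  obtain ⟨φ, hφ⟩ := hM (f.sup g hfg).domain (f.sup g hfg).toFun
  refine ⟨φ, fun x ↦ ?_, fun y ↦ ?_⟩
  · exact (hφ x (le_sup_left (a := f.domain) x.2)).trans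
      ((f.left_le_sup g hfg).2 (y := ⟨x, _⟩) rfl).symm
  · exact (hφ y (le_sup_right (a := f.domain) y.2)).trans
      ((f.right_le_sup g hfg).2 (y := ⟨y, _⟩) rfl).symm

lemma exists_pow_inf_le_ker [IsNoetherianRing R] {I 𝔞 : Ideal R} (g : 𝔞 →ₗ[R] M)
    (hg : ∀ a, g a ∈ idealTorsion I M) : ∃ m, ∀ a : 𝔞, (a : R) ∈ I ^ m → g a = 0 := by
  have hrange : (LinearMap.range g).FG := by
    rw [← Submodule.map_top]
    exact (IsNoetherian.noetherian (⊤ : Submodule R 𝔞)).map g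
  obtain ⟨s, hs⟩ := Ideal.exists_pow_le_of_le_radical_of_fg
    (le_radical_annihilator_of_le_idealTorsion hrange (LinearMap.range_le_iff_comap.2
      (eq_top_iff.2 fun a _ ↦ hg a))) (IsNoetherian.noetherian I)
  obtain ⟨m, hm⟩ := exists_pow_inf_le_pow_mul I 𝔞 s
  have hker : I ^ s * 𝔞 ≤ (LinearMap.ker g).map 𝔞.subtype := by
    refine Ideal.mul_le.2 fun r hr a ha ↦ ⟨r • ⟨a, ha⟩, ?_, rfl⟩
    rw [SetLike.mem_coe, LinearMap.mem_ker, map_smul]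
    exact Submodule.mem_annihilator.1 (hs hr) _ ⟨_, rfl⟩
  refine ⟨m, fun a ha ↦ ?_⟩
  obtain ⟨b, hb, hba⟩ := hker (hm ⟨ha, a.2⟩)
  rwa [← Subtype.ext hba]

/-- By Artin–Rees a map `𝔞 → Γ_I(M)` kills `𝔞 ∩ I^m` for some `m`, so it extends to a map
`R → M` that kills `I^m`. -/
lemma baer_idealTorsion [IsNoetherianRing R] (I : Ideal R) (hM : Module.Baer R M) :
    Module.Baer R (idealTorsion I M) := by
  intro 𝔞 g
  obtain ⟨m, hm⟩ := exists_pow_inf_le_ker ((idealTorsion I M).subtype ∘ₗ g) fun a ↦ (g a).2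
  obtain ⟨φ, hφg, hφI⟩ := exists_linearMap_extending_pair hM
    ⟨𝔞, (idealTorsion I M).subtype ∘ₗ g⟩ ⟨I ^ m, 0⟩ fun x y hxy ↦ hm x (hxy ▸ y.2)
  have hφ (c : R) : φ c ∈ idealTorsion I M :=
    mem_idealTorsion_of_pow m fun a ha ↦ by
      rw [← map_smul]
      exact hφI ⟨a • c, Ideal.mul_mem_right _ _ ha⟩
  exact ⟨φ.codRestrict _ hφ, fun x hx ↦ Subtype.ext (hφg ⟨x, hx⟩)⟩

lemma idealTorsion_inf_le_sup [IsNoetherianRing R] (J J' : Ideal R) (hM : Module.Baer R M) :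
    idealTorsion (J ⊓ J') M ≤ idealTorsion J M ⊔ idealTorsion J' M := by
  intro e he
  obtain ⟨s, hs⟩ := exists_pow_smul_eq_zero_of_mem_idealTorsion he
  obtain ⟨m, hm⟩ := exists_pow_inf_le_pow_mul J (J' ^ s) s
  have hJJ' : J ^ m ⊓ J' ^ s ≤ (J ⊓ J') ^ s :=
    hm.trans ((mul_pow J J' s).ge.trans (Ideal.pow_right_mono Ideal.mul_le_inf s))
  obtain ⟨φ, hφJ, hφJ'⟩ := exists_linearMap_extending_pair hM ⟨J ^ m, 0⟩
    ⟨J' ^ s, LinearMap.toSpanSingleton R M e ∘ₗ (J' ^ s).subtype⟩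
    fun x y hxy ↦ (hs y (hJJ' ⟨hxy ▸ x.2, y.2⟩)).symm
  have hφ (a : R) : a • φ 1 = φ a := by rw [← map_smul, smul_eq_mul, mul_one]
  refine Submodule.mem_sup.2 ⟨φ 1, mem_idealTorsion_of_pow m fun a ha ↦ ?_, e - φ 1,
    mem_idealTorsion_of_pow s fun a ha ↦ ?_, add_sub_cancel _ _⟩
  · exact (hφ a).trans (hφJ ⟨a, ha⟩)
  · rw [smul_sub, hφ, hφJ' ⟨a, ha⟩]
    exact sub_self (a • e)

end IdealTorsion

/-! ### Torsion submodules of cosyzygies -/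

lemma length_le_add_of_exact {R M N P : Type*} [Ring R] [AddCommGroup M] [Module R M]
    [AddCommGroup N] [Module R N] [AddCommGroup P] [Module R P] {f : M →ₗ[R] N} {g : N →ₗ[R] P}
    (hfg : Function.Exact f g) :
    Module.length R N ≤ Module.length R M + Module.length R P := by
  have hker : Function.Exact (LinearMap.ker g).subtype g.rangeRestrict := by
    rw [LinearMap.exact_iff, LinearMap.ker_rangeRestrict, Submodule.range_subtype]
  rw [Module.length_eq_add_of_exact _ _ (LinearMap.ker g).injective_subtype
    g.surjective_rangeRestrict hker]
  refine add_le_add ?_ (Module.length_le_of_injective _ (LinearMap.range g).injective_subtype)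
  rw [LinearMap.exact_iff.1 hfg]
  exact Module.length_le_of_surjective f.rangeRestrict f.surjective_rangeRestrict

section TorsionCosyzygy

open Abelian

variable {R : Type u} [CommRing R]

/-- The length of the `R`-module `Ext^i(L, M)`. -/
abbrev extLength (L M : ModuleCat.{u} R) (i : ℕ) : ℕ∞ := Module.length R (Ext.{u} L M i)

lemma extLength_succ_le (L : ModuleCat.{u} R) {S : ShortComplex (ModuleCat.{u} R)}
    (hS : S.ShortExact) (i : ℕ) :
    extLength L S.X₁ (i + 1) ≤ extLength L S.X₃ i + extLength L S.X₂ (i + 1) := by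
  refine length_le_add_of_exact (f := Ext.postcompOfLinear hS.extClass R L rfl)
    (g := Ext.postcompOfLinear (Ext.mk₀ S.f) R L (add_zero (i + 1))) fun x ↦ ⟨fun hx ↦ ?_, ?_⟩
  · exact Ext.covariant_sequence_exact₁ L hS x hx rfl
  · rintro ⟨y, rfl⟩
    exact (Ext.comp_assoc_of_third_deg_zero _ _ _ rfl).trans
      (by rw [hS.extClass_comp, Ext.comp_zero])

lemma injective_under_cosyzygy_hom (M : ModuleCat.{u} R) (q : ℕ) :
    Function.Injective (Injective.ι (cosyzygy M q)).hom :=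
  (cosyzygyShortComplex_shortExact M q).moduleCat_injective_f

lemma exact_cosyzygy_hom (M : ModuleCat.{u} R) (q : ℕ) :
    Function.Exact (Injective.ι (cosyzygy M q)).hom (cosyzygyπ M q).hom :=
  (ShortComplex.ShortExact.moduleCat_exact_iff_function_exact _).1
    (cosyzygyShortComplex_shortExact M q).exact

lemma baer_under_cosyzygy (M : ModuleCat.{u} R) (q : ℕ) :
    Module.Baer R (Injective.under (cosyzygy M q) : ModuleCat.{u} R) :=
  Module.Baer.of_injective ((Module.injective_iff_injective_object _ _).2
    (inferInstanceAs (Injective (Injective.under (cosyzygy M q)))))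

variable (J : Ideal R) (M : ModuleCat.{u} R)

/-- The torsion submodule `Γ_J(Z^q)` of the `q`-th cosyzygy of `M`. -/
abbrev torsionCosyzygy (q : ℕ) : ModuleCat.{u} R :=
  ModuleCat.of R (idealTorsion J (cosyzygy M q : ModuleCat.{u} R))

/-- The term `Γ_J(E^q)` of the complex computing the local cohomology of `M`. -/
abbrev torsionUnder (q : ℕ) : ModuleCat.{u} R :=
  ModuleCat.of R (idealTorsion J (Injective.under (cosyzygy M q) : ModuleCat.{u} R))

instance injective_torsionUnder [IsNoetherianRing R] (q : ℕ) : Injective (torsionUnder J M q) :=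
  (Module.injective_iff_injective_object _ _).1
    (baer_idealTorsion J (baer_under_cosyzygy M q)).injective

/-- The map `Γ_J(E^q) → Γ_J(Z^{q+1})`. -/
abbrev torsionπ (q : ℕ) : torsionUnder J M q →ₗ[R] torsionCosyzygy J M (q + 1) :=
  idealTorsionMap J (cosyzygyπ M q).hom

/-- The quotient of `Γ_J(Z^{q+1})` by the image of `Γ_J(E^q)`, a model of the local cohomology
module `H^{q+1}_J(M)`. -/
abbrev torsionCohomology (q : ℕ) : ModuleCat.{u} R :=
  ModuleCat.of R (torsionCosyzygy J M (q + 1) ⧸ LinearMap.range (torsionπ J M q))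

lemma exact_torsionπ_rangeRestrict (q : ℕ) :
    Function.Exact (idealTorsionMap J (Injective.ι (cosyzygy M q)).hom)
      (torsionπ J M q).rangeRestrict := by
  rw [LinearMap.exact_iff, LinearMap.ker_rangeRestrict, ← LinearMap.exact_iff]
  exact exact_idealTorsionMap J (injective_under_cosyzygy_hom M q) (exact_cosyzygy_hom M q)

/-- The short exact sequence `0 → Γ_J(Z^q) → Γ_J(E^q) → B → 0`, where `B ⊆ Γ_J(Z^{q+1})` is the
submodule of coboundaries. -/
abbrev torsionShortComplex (q : ℕ) : ShortComplex (ModuleCat.{u} R) :=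
  ModuleCat.shortComplexOfCompEqZero _ _
    (exact_torsionπ_rangeRestrict J M q).linearMap_comp_eq_zero

lemma torsionShortComplex_shortExact (q : ℕ) : (torsionShortComplex J M q).ShortExact :=
  ModuleCat.shortComplex_shortExact _ (exact_torsionπ_rangeRestrict J M q)
    (idealTorsionMap_injective J (injective_under_cosyzygy_hom M q))
    (LinearMap.surjective_rangeRestrict _)

/-- The inclusion `Γ_J(Z^q) → Z^q`. -/
abbrev torsionInclusion (q : ℕ) : torsionCosyzygy J M q ⟶ cosyzygy M q :=
  ModuleCat.ofHom (idealTorsion J (cosyzygy M q : ModuleCat.{u} R)).subtype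

/-- The restriction to `Γ_J(Z^q)` of the dimension shifting class in `Ext^q(Z^q, M)`. -/
abbrev torsionExtClass (q : ℕ) : Ext.{u} (torsionCosyzygy J M q) M q :=
  (Ext.mk₀ (torsionInclusion J M q)).comp (cosyzygyExtClass M q) (zero_add q)

/-- The inclusion of the coboundaries into `Γ_J(Z^{q+1})`. -/
abbrev coboundaryInclusion (q : ℕ) :
    (torsionShortComplex J M q).X₃ ⟶ torsionCosyzygy J M (q + 1) :=
  ModuleCat.ofHom (LinearMap.range (torsionπ J M q)).subtype

lemma extClass_comp_torsionExtClass (q : ℕ) :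
    (torsionShortComplex_shortExact J M q).extClass.comp (torsionExtClass J M q) (add_comm 1 q) =
      (Ext.mk₀ (coboundaryInclusion J M q)).comp (torsionExtClass J M (q + 1)) (zero_add _) := by
  let φ : torsionShortComplex J M q ⟶ cosyzygyShortComplex M q :=
    { τ₁ := torsionInclusion J M q
      τ₂ := ModuleCat.ofHom (idealTorsion J _).subtype
      τ₃ := coboundaryInclusion J M q ≫ torsionInclusion J M (q + 1)
      comm₁₂ := rfl
      comm₂₃ := rfl }
  have hφ := ShortComplex.ShortExact.extClass_naturality (torsionShortComplex_shortExact J M q)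
    (cosyzygyShortComplex_shortExact M q) φ
  have hassoc := Ext.comp_assoc (torsionShortComplex_shortExact J M q).extClass (Ext.mk₀ φ.τ₁)
    (cosyzygyExtClass M q) (add_zero 1) (zero_add q) (add_comm 1 q)
  rw [← hassoc, hφ, ← Ext.comp_assoc (Ext.mk₀ (coboundaryInclusion J M q)) _ _ (zero_add 0)
    (zero_add (q + 1)) (zero_add _), Ext.mk₀_comp_mk₀, comp_cosyzygyExtClass_succ]

variable {J M} {L : ModuleCat.{u} R}

lemma comp_extClass_comp_torsionExtClass {q i j : ℕ} (hj : i + (q + 1) = j)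
    (β : Ext.{u} L (torsionShortComplex J M q).X₃ i) :
    (β.comp (torsionShortComplex_shortExact J M q).extClass rfl).comp (torsionExtClass J M q)
      (by omega : (i + 1) + q = j) =
      (β.comp (Ext.mk₀ (coboundaryInclusion J M q)) (add_zero i)).comp
        (torsionExtClass J M (q + 1)) hj := by
  rw [Ext.comp_assoc β _ _ rfl (add_comm 1 q) (by omega), extClass_comp_torsionExtClass,
    Ext.comp_assoc β _ _ (add_zero i) (zero_add (q + 1)) (by omega)]

lemma exists_comp_torsionExtClass_succ_eq [IsNoetherianRing R] {q i j : ℕ} (hj : i + 1 + q = j)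
    (α : Ext.{u} L (torsionCosyzygy J M q) (i + 1)) :
    ∃ β : Ext.{u} L (torsionCosyzygy J M (q + 1)) i,
      β.comp (torsionExtClass J M (q + 1)) (by omega) = α.comp (torsionExtClass J M q) hj := by
  obtain ⟨β, hβ⟩ := Ext.covariant_sequence_exact₁ L (torsionShortComplex_shortExact J M q) α
    (Ext.eq_zero_of_injective (I := torsionUnder J M q) _) rfl
  exact ⟨_, by rw [← hβ]; exact (comp_extClass_comp_torsionExtClass (by omega) β).symm⟩

lemma exists_comp_torsionExtClass_add_eq [IsNoetherianRing R] {q i m j : ℕ} (s : ℕ)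
    (hm : i + s = m) (hj : m + q = j) (α : Ext.{u} L (torsionCosyzygy J M q) m) :
    ∃ β : Ext.{u} L (torsionCosyzygy J M (q + s)) i,
      β.comp (torsionExtClass J M (q + s)) (by omega) = α.comp (torsionExtClass J M q) hj := by
  induction s generalizing i with
  | zero =>
    obtain rfl : i = m := hm
    exact ⟨α, rfl⟩
  | succ s ih =>
    obtain ⟨β, hβ⟩ := ih (i := i + 1) (by omega)
    obtain ⟨γ, hγ⟩ := exists_comp_torsionExtClass_succ_eq (j := j) (by omega) β
    exact ⟨γ, hγ.trans hβ⟩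

variable (J M L) in
lemma extLength_torsionCosyzygy_le [IsNoetherianRing R] (q i : ℕ) :
    extLength L (torsionCosyzygy J M q) (i + 2) ≤
      extLength L (torsionCohomology J M q) i +
        extLength L (torsionCosyzygy J M (q + 1)) (i + 1) := by
  have hcoboundary : (ModuleCat.shortComplexOfCompEqZero _ _
      (LinearMap.exact_subtype_mkQ (LinearMap.range (torsionπ J M q))).linearMap_comp_eq_zero
      ).ShortExact :=
    ModuleCat.shortComplex_shortExact _ (LinearMap.exact_subtype_mkQ _)
      (Submodule.injective_subtype _) (Submodule.mkQ_surjective _)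
  have hinj : extLength L (torsionUnder J M q) (i + 2) = 0 :=
    Module.length_eq_zero_iff.2 (Ext.subsingleton_of_injective _ _ _)
  calc extLength L (torsionCosyzygy J M q) (i + 2)
      ≤ extLength L (torsionShortComplex J M q).X₃ (i + 1) +
          extLength L (torsionUnder J M q) (i + 2) :=
        extLength_succ_le L (torsionShortComplex_shortExact J M q) (i + 1)
    _ = extLength L (torsionShortComplex J M q).X₃ (i + 1) := by rw [hinj, add_zero]
    _ ≤ _ := extLength_succ_le L hcoboundary i

lemma injective_postcomp_torsionExtClass [IsNoetherianRing R] (hL : idealTorsion J L = ⊤)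
    (q : ℕ) :
    Function.Injective (Ext.postcompOfLinear (torsionExtClass J M q) R L (add_comm 1 q)) := by
  refine (injective_iff_map_eq_zero _).2 fun α hα ↦ ?_
  obtain ⟨β, rfl⟩ := Ext.covariant_sequence_exact₁ L (torsionShortComplex_shortExact J M q) α
    (Ext.eq_zero_of_injective (I := torsionUnder J M q) _) (zero_add 1)
  obtain ⟨b, rfl⟩ := (Ext.mk₀_bijective _ _).2 β
  obtain ⟨w, hw⟩ : ∃ w, w ≫ cosyzygyπ M q =
      (b ≫ coboundaryInclusion J M q) ≫ torsionInclusion J M (q + 1) := by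
    rw [← mk₀_comp_cosyzygyExtClass_succ_eq_zero_iff, ← Ext.mk₀_comp_mk₀, Ext.comp_assoc _ _ _
      (zero_add 0) (zero_add (q + 1)) (zero_add _), ← Ext.mk₀_comp_mk₀]
    exact (comp_extClass_comp_torsionExtClass (zero_add _) _).symm.trans hα
  have hwJ (x : L) : w.hom x ∈ idealTorsion J (Injective.under (cosyzygy M q) : ModuleCat.{u} R) :=
    map_mem_idealTorsion w.hom (hL ▸ Submodule.mem_top)
  obtain rfl : ModuleCat.ofHom (w.hom.codRestrict _ hwJ) ≫ (torsionShortComplex J M q).g = b := by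
    ext x
    exact congrArg (fun f ↦ f.hom x) hw
  rw [← Ext.mk₀_comp_mk₀, Ext.comp_assoc_of_second_deg_zero,
    (torsionShortComplex_shortExact J M q).comp_extClass, Ext.comp_zero]

variable (M) in
lemma extLength_torsionCosyzygy_le_add_sum [IsNoetherianRing R] (hL : idealTorsion J L = ⊤)
    {t n : ℕ} (ht : t + 2 ≤ n) :
    extLength L (torsionCosyzygy J M (n - t - 2)) (t + 2) ≤ extLength L M n +
      ∑ i ∈ Finset.range (t + 1), extLength L (torsionCohomology J M (n - i - 2)) i := by
  induction t with
  | zero =>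
    obtain ⟨m, rfl⟩ : ∃ m, n = m + 1 + 1 := ⟨n - 2, by omega⟩
    rw [Finset.sum_range_one, add_comm (extLength L M _)]
    exact (extLength_torsionCosyzygy_le J M L m 0).trans (add_le_add le_rfl
      (Module.length_le_of_injective _ (injective_postcomp_torsionExtClass hL (m + 1))))
  | succ t ih =>
    have hq : n - (t + 1) - 2 + 1 = n - t - 2 := by omega
    refine (extLength_torsionCosyzygy_le J M L _ (t + 1)).trans ?_
    rw [Finset.sum_range_succ, add_comm, ← add_assoc, hq]
    exact add_le_add (ih (by omega)) le_rfl

end TorsionCosyzygy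

/-! ### Comparison of the two Ext functors -/

section OpHomology

open Opposite

variable {R : Type u} [CommRing R] (K : ChainComplex (ModuleCat.{u} R)ᵒᵖ ℕ) (q : ℕ)

/-- The cocycles of a chain complex in `(ModuleCat R)ᵒᵖ`, read as a cochain complex of modules. -/
abbrev opCocycles : Submodule R (K.X q).unop := LinearMap.ker (K.d (q + 1) q).unop.hom

/-- The inclusion of the cocycles. -/
abbrev opCocyclesι : ModuleCat.of R (opCocycles K q) ⟶ (K.X q).unop :=
  ModuleCat.ofHom (opCocycles K q).subtype

lemma d_comp_opCocyclesι_op : K.d (q + 1) q ≫ (opCocyclesι K q).op = 0 := by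
  apply Quiver.Hom.unop_inj
  ext x
  exact x.2

/-- The comparison of the opcycles of `K` with the cocycles of the opposite complex. -/
abbrev opcyclesToOpCocycles : K.opcycles q ⟶ op (ModuleCat.of R (opCocycles K q)) :=
  K.descOpcycles (opCocyclesι K q).op (q + 1) (by simp) (d_comp_opCocyclesι_op K q)

instance mono_opcyclesToOpCocycles : Mono (opcyclesToOpCocycles K q) := by
  have hd : K.d (q + 1) q ≫ K.pOpcycles q = 0 := K.d_pOpcycles _ _
  let r : (K.opcycles q).unop ⟶ ModuleCat.of R (opCocycles K q) :=
    ModuleCat.ofHom ((K.pOpcycles q).unop.hom.codRestrict _ fun c ↦ by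
      exact congrArg (fun f ↦ f.unop.hom c) hd)
  have hr : r ≫ opCocyclesι K q = (K.pOpcycles q).unop := rfl
  have hretract : opcyclesToOpCocycles K q ≫ r.op = 𝟙 _ := by
    rw [← cancel_epi (K.pOpcycles q), K.p_descOpcycles_assoc, ← op_comp, hr, Quiver.Hom.op_unop,
      Category.comp_id]
  exact mono_of_mono_fac hretract

/-- The monomorphism from homology to cocycles; its opposite is the quotient map from cocycles to
cohomology. -/
abbrev homologyToOpCocycles : K.homology q ⟶ op (ModuleCat.of R (opCocycles K q)) :=
  K.homologyι q ≫ opcyclesToOpCocycles K q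

lemma homologyToOpCocycles_unop_eq_zero_iff (x : opCocycles K q) :
    (homologyToOpCocycles K q).unop.hom x = 0 ↔
      ∃ g : (K.X ((ComplexShape.down ℕ).next q)).unop,
        (K.d q ((ComplexShape.down ℕ).next q)).unop.hom g = x.1 := by
  set j := (ComplexShape.down ℕ).next q with hj
  have hexact : (ShortComplex.mk (K.homologyι q) (K.fromOpcycles q j)
      (K.homologyι_comp_fromOpcycles q j)).Exact :=
    ShortComplex.exact_of_f_is_kernel _ (K.homologyIsKernel q j hj)
  have hx : (K.pOpcycles q).unop.hom ((opcyclesToOpCocycles K q).unop.hom x) = x.1 :=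
    congrArg (fun f ↦ f.unop.hom x) (K.p_descOpcycles (opCocyclesι K q).op _ _ _)
  have hd (g) : (K.pOpcycles q).unop.hom ((K.fromOpcycles q j).unop.hom g) =
      (K.d q j).unop.hom g := by
    exact congrArg (fun f ↦ f.unop.hom g) (K.p_fromOpcycles q j)
  constructor
  · intro h
    obtain ⟨g, hg⟩ := (ShortComplex.moduleCat_exact_iff _).1 hexact.unop _ h
    exact ⟨g, (hd g).symm.trans ((congrArg (K.pOpcycles q).unop.hom hg).trans hx)⟩
  · rintro ⟨g, hg⟩
    rw [← hd, ← hx] at hg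
    have hmono : Mono (K.pOpcycles q).unop := unop_mono_of_epi _
    change (K.homologyι q).unop.hom ((opcyclesToOpCocycles K q).unop.hom x) = 0
    rw [← (ModuleCat.mono_iff_injective _).1 hmono hg]
    exact congrArg (fun f ↦ f.unop.hom g) (K.homologyι_comp_fromOpcycles q j)

variable {K} {L : ChainComplex (ModuleCat.{u} R)ᵒᵖ ℕ} (φ : K ⟶ L)

/-- The map induced on cocycles by a morphism of complexes. -/
abbrev opCocyclesMap : opCocycles L q →ₗ[R] opCocycles K q :=
  (φ.f q).unop.hom.restrict fun x hx ↦ by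
    have hφ : φ.f (q + 1) ≫ L.d (q + 1) q = K.d (q + 1) q ≫ φ.f q := φ.comm _ _
    refine (congrArg (fun f ↦ f.unop.hom x) hφ).symm.trans ?_
    exact (congrArg (φ.f (q + 1)).unop.hom (LinearMap.mem_ker.1 hx)).trans (map_zero _)

lemma homologyMap_comp_homologyToOpCocycles :
    HomologicalComplex.homologyMap φ q ≫ homologyToOpCocycles L q =
      homologyToOpCocycles K q ≫ (ModuleCat.ofHom (opCocyclesMap q φ)).op := by
  rw [homologyToOpCocycles, HomologicalComplex.homologyι_naturality_assoc, homologyToOpCocycles,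
    Category.assoc]
  congr 1
  rw [← cancel_epi (K.pOpcycles q), HomologicalComplex.p_opcyclesMap_assoc,
    HomologicalComplex.p_descOpcycles, HomologicalComplex.p_descOpcycles_assoc]
  rfl

end OpHomology

section ExtComparison

open Abelian Opposite Limits

variable {R : Type u} [CommRing R] {L L' : ModuleCat.{u} R}

/-- The complex `Hom(P, Y)`, as a chain complex in the opposite category. -/
abbrev homComplex (P : ProjectiveResolution L) (Y : ModuleCat.{u} R) :
    ChainComplex (ModuleCat.{u} R)ᵒᵖ ℕ :=
  (((linearYoneda R (ModuleCat.{u} R)).obj Y).rightOp.mapHomologicalComplex _).obj P.complex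

/-- `Ext^q(L, Y)` as the left derived functor of `Hom(-, Y)`, the version of Ext from which
`localCohomology` is built; `Abelian.Ext` denotes morphisms in the derived category. -/
abbrev derivedExt (L Y : ModuleCat.{u} R) (q : ℕ) : ModuleCat.{u} R :=
  ((_root_.Ext R (ModuleCat.{u} R) q).obj (op L)).obj Y

/-- The contravariant functoriality of `derivedExt` in its first argument. -/
abbrev derivedExtMap (f : L ⟶ L') (Y : ModuleCat.{u} R) (q : ℕ) :
    derivedExt L' Y q ⟶ derivedExt L Y q :=
  ((_root_.Ext R (ModuleCat.{u} R) q).map f.op).app Y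

/-- The computation of `derivedExt` by a projective resolution. -/
def opDerivedExtIso (P : ProjectiveResolution L) (Y : ModuleCat.{u} R) (q : ℕ) :
    op (derivedExt L Y q) ≅ (homComplex P Y).homology q :=
  P.isoLeftDerivedObj ((linearYoneda R (ModuleCat.{u} R)).obj Y).rightOp q

/-- The cocycles `P_q → Y` of the complex `Hom(P, Y)`. -/
abbrev homCocycles (P : ProjectiveResolution L) (Y : ModuleCat.{u} R) (q : ℕ) :
    Submodule R (P.complex.X q ⟶ Y) :=
  opCocycles (homComplex P Y) q

/-- Precomposition of cocycles with a morphism of resolutions. -/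
def homCocyclesMap (P : ProjectiveResolution L) (P' : ProjectiveResolution L')
    (φ : P.complex ⟶ P'.complex) (Y : ModuleCat.{u} R) (q : ℕ) :
    homCocycles P' Y q →ₗ[R] homCocycles P Y q :=
  opCocyclesMap q
    ((((linearYoneda R (ModuleCat.{u} R)).obj Y).rightOp.mapHomologicalComplex _).map φ)

/-- The class in `derivedExt` of a cocycle. -/
def toDerivedExt (P : ProjectiveResolution L) (Y : ModuleCat.{u} R) (q : ℕ) :
    ModuleCat.of R (homCocycles P Y q) ⟶ derivedExt L Y q :=
  ((opDerivedExtIso P Y q).hom ≫ homologyToOpCocycles (homComplex P Y) q).unop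

lemma toDerivedExt_surjective (P : ProjectiveResolution L) (Y : ModuleCat.{u} R) (q : ℕ) :
    Function.Surjective (toDerivedExt P Y q).hom := by
  have hepi : Epi (toDerivedExt P Y q) := unop_epi_of_mono _
  exact (ModuleCat.epi_iff_surjective _).1 hepi

lemma toDerivedExt_eq_zero_iff (P : ProjectiveResolution L) (Y : ModuleCat.{u} R) (q : ℕ)
    (x : homCocycles P Y q) :
    (toDerivedExt P Y q).hom x = 0 ↔
      ∃ g : P.complex.X ((ComplexShape.down ℕ).next q) ⟶ Y,
        P.complex.d q ((ComplexShape.down ℕ).next q) ≫ g = x.1 := by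
  have hinj : Function.Injective (opDerivedExtIso P Y q).hom.unop.hom :=
    (ModuleCat.mono_iff_injective _).1 inferInstance
  exact (map_eq_zero_iff _ hinj).trans (homologyToOpCocycles_unop_eq_zero_iff (homComplex P Y) q x)

lemma derivedExtMap_toDerivedExt (P : ProjectiveResolution L) (P' : ProjectiveResolution L')
    (f : L ⟶ L') (φ : P.complex ⟶ P'.complex) (comm : φ.f 0 ≫ P'.π.f 0 = P.π.f 0 ≫ f)
    (Y : ModuleCat.{u} R) (q : ℕ) (x : homCocycles P' Y q) :
    (derivedExtMap f Y q).hom ((toDerivedExt P' Y q).hom x) =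
      (toDerivedExt P Y q).hom (homCocyclesMap P P' φ Y q x) := by
  let Φ := (((linearYoneda R (ModuleCat.{u} R)).obj Y).rightOp.mapHomologicalComplex
    (ComplexShape.down ℕ)).map φ
  have hderived : (derivedExtMap f Y q).op ≫ (opDerivedExtIso P' Y q).hom =
      (opDerivedExtIso P Y q).hom ≫ HomologicalComplex.homologyMap Φ q :=
    ProjectiveResolution.isoLeftDerivedObj_hom_naturality f P P' φ comm
      ((linearYoneda R (ModuleCat.{u} R)).obj Y).rightOp q
  have hsquare : (derivedExtMap f Y q).op ≫
      (opDerivedExtIso P' Y q).hom ≫ homologyToOpCocycles (homComplex P' Y) q =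
      ((opDerivedExtIso P Y q).hom ≫ homologyToOpCocycles (homComplex P Y) q) ≫
        (ModuleCat.ofHom (opCocyclesMap q Φ)).op := by
    rw [reassoc_of% hderived, homologyMap_comp_homologyToOpCocycles]
    exact (Category.assoc _ _ _).symm
  exact congrArg (fun f ↦ f.unop.hom x) hsquare

lemma d_comp_homCocycles {P : ProjectiveResolution L} {Y : ModuleCat.{u} R} {q : ℕ}
    (x : homCocycles P Y q) : P.complex.d (q + 1) q ≫ x.1 = 0 :=
  x.2

/-- The class in `Abelian.Ext` of a cocycle. -/
def toAbelianExt (P : ProjectiveResolution L) (Y : ModuleCat.{u} R) (q : ℕ) :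
    homCocycles P Y q →ₗ[R] Abelian.Ext.{u} L Y q where
  toFun x := P.extMk x.1 (q + 1) rfl (d_comp_homCocycles x)
  map_add' x y :=
    (P.add_extMk x.1 y.1 (q + 1) rfl (d_comp_homCocycles x) (d_comp_homCocycles y)).symm
  map_smul' r x := by
    rw [RingHom.id_apply, Ext.smul_eq_comp_mk₀, ProjectiveResolution.extMk_comp_mk₀]
    congr 1

lemma toAbelianExt_surjective (P : ProjectiveResolution L) (Y : ModuleCat.{u} R) (q : ℕ) :
    Function.Surjective (toAbelianExt P Y q) := by
  intro α
  obtain ⟨f, hf, rfl⟩ := P.extMk_surjective α (q + 1) rfl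
  exact ⟨⟨f, hf⟩, rfl⟩

lemma eq_zero_of_extMk_zero_eq_zero {Y : ModuleCat.{u} R} (P : ProjectiveResolution L)
    (f : P.complex.X 0 ⟶ Y) (hf : P.complex.d 1 0 ≫ f = 0) (h : P.extMk f 1 rfl hf = 0) :
    f = 0 := by
  rw [← P.extEquivCohomologyClass.apply_eq_iff_eq, P.extEquivCohomologyClass_extMk,
    P.extEquivCohomologyClass_zero, CochainComplex.HomComplex.CohomologyClass.mk_eq_zero_iff,
    CochainComplex.HomComplex.Cocycle.toSingleMk_mem_coboundaries_iff _ _ _ _ _ 1 (by simp)] at h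
  obtain ⟨g, hg⟩ := h
  have hzero : IsZero (P.cochainComplex.X 1) :=
    P.complex.isZero_extend_X ComplexShape.embeddingDownNat 1 fun i hi ↦ by
      rw [ComplexShape.embeddingDownNat_f] at hi
      omega
  rw [hzero.eq_of_src g 0, comp_zero] at hg
  rw [← cancel_epi (P.cochainComplexXIso (-(0 : ℕ)) 0 rfl).hom, comp_zero]
  exact hg.symm

lemma toAbelianExt_eq_zero_iff (P : ProjectiveResolution L) (Y : ModuleCat.{u} R) (q : ℕ)
    (x : homCocycles P Y q) :
    toAbelianExt P Y q x = 0 ↔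
      ∃ g : P.complex.X ((ComplexShape.down ℕ).next q) ⟶ Y,
        P.complex.d q ((ComplexShape.down ℕ).next q) ≫ g = x.1 := by
  cases q with
  | zero =>
    have hd : P.complex.d 0 ((ComplexShape.down ℕ).next 0) = 0 := P.complex.shape _ _ (by simp)
    constructor
    · exact fun h ↦ ⟨0, comp_zero.trans
        (eq_zero_of_extMk_zero_eq_zero P x.1 (d_comp_homCocycles x) h).symm⟩
    · rintro ⟨g, hg⟩
      rw [hd, zero_comp] at hg
      rw [show x = 0 from Subtype.ext hg.symm, map_zero]
  | succ q =>
    rw [ChainComplex.next_nat_succ]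
    exact P.extMk_eq_zero_iff _ (q + 1 + 1) rfl (d_comp_homCocycles x) q rfl

lemma mk₀_comp_toAbelianExt (P : ProjectiveResolution L) (P' : ProjectiveResolution L')
    (f : L ⟶ L') (φ : P.complex ⟶ P'.complex) (comm : φ.f 0 ≫ P'.π.f 0 = P.π.f 0 ≫ f)
    (Y : ModuleCat.{u} R) (q : ℕ) (x : homCocycles P' Y q) :
    (Ext.mk₀ f).comp (toAbelianExt P' Y q x) (zero_add q) =
      toAbelianExt P Y q (homCocyclesMap P P' φ Y q x) :=
  ProjectiveResolution.mk₀_comp_extMk _ _ rfl (d_comp_homCocycles x) ⟨φ, by rw [comm]; simp⟩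

/-- The two versions of Ext agree, as both are the quotient of cocycles by coboundaries. -/
def extEquivDerivedExt (L Y : ModuleCat.{u} R) (q : ℕ) :
    Abelian.Ext.{u} L Y q ≃ₗ[R] derivedExt L Y q :=
  ((toAbelianExt (projectiveResolution L) Y q).quotKerEquivOfSurjective
      (toAbelianExt_surjective _ Y q)).symm ≪≫ₗ
    Submodule.quotEquivOfEq _ _ (by
      ext x
      rw [LinearMap.mem_ker, LinearMap.mem_ker, toAbelianExt_eq_zero_iff,
        toDerivedExt_eq_zero_iff]) ≪≫ₗ
    (toDerivedExt (projectiveResolution L) Y q).hom.quotKerEquivOfSurjective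
      (toDerivedExt_surjective _ Y q)

lemma extEquivDerivedExt_toAbelianExt (L Y : ModuleCat.{u} R) (q : ℕ)
    (x : homCocycles (projectiveResolution L) Y q) :
    extEquivDerivedExt L Y q (toAbelianExt (projectiveResolution L) Y q x) =
      (toDerivedExt (projectiveResolution L) Y q).hom x := by
  have hmk : ((toAbelianExt (projectiveResolution L) Y q).quotKerEquivOfSurjective
      (toAbelianExt_surjective _ Y q)).symm (toAbelianExt (projectiveResolution L) Y q x) =
      Submodule.Quotient.mk x :=
    (LinearEquiv.symm_apply_eq _).2 rfl
  simp only [extEquivDerivedExt, LinearEquiv.trans_apply, hmk]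
  rfl

lemma derivedExtMap_extEquivDerivedExt (f : L ⟶ L') (Y : ModuleCat.{u} R) (q : ℕ)
    (x : Abelian.Ext.{u} L' Y q) :
    (derivedExtMap f Y q).hom (extEquivDerivedExt L' Y q x) =
      extEquivDerivedExt L Y q ((Ext.mk₀ f).comp x (zero_add q)) := by
  obtain ⟨y, rfl⟩ := toAbelianExt_surjective (projectiveResolution L') Y q x
  have comm := ProjectiveResolution.lift_commutes_zero f (projectiveResolution L)
    (projectiveResolution L')
  rw [extEquivDerivedExt_toAbelianExt, mk₀_comp_toAbelianExt _ _ f _ comm,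
    extEquivDerivedExt_toAbelianExt]
  exact derivedExtMap_toDerivedExt _ _ f _ comm Y q y

end ExtComparison

/-! ### Local cohomology as a quotient of torsion submodules -/

section LocalCohomologyColimit

open Abelian Opposite Limits

variable {R : Type u} [CommRing R] (I : Ideal R) (q : ℕ) (M : ModuleCat.{u} R)

/-- The projection `R ⧸ I ^ s' → R ⧸ I ^ s`. -/
abbrev quotientPowMap {s s' : ℕ} (h : s ≤ s') :
    ModuleCat.of R (R ⧸ I ^ s') ⟶ ModuleCat.of R (R ⧸ I ^ s) :=
  ModuleCat.ofHom (Submodule.mapQ _ _ LinearMap.id (Ideal.pow_le_pow_right h))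

/-- The transition map `Ext^q(R ⧸ I ^ s, M) → Ext^q(R ⧸ I ^ s', M)`. -/
abbrev extQuotientPowMap {s s' : ℕ} (h : s ≤ s') :
    Abelian.Ext.{u} (ModuleCat.of R (R ⧸ I ^ s)) M q →
      Abelian.Ext.{u} (ModuleCat.of R (R ⧸ I ^ s')) M q :=
  fun x ↦ (Ext.mk₀ (quotientPowMap I h)).comp x (zero_add q)

/-- The system of modules `Ext^q(R ⧸ I ^ s, M)` whose colimit is the local cohomology of `M`. -/
def localCohomologyDiagram : ℕᵒᵖᵒᵖ ⥤ ModuleCat.{u} R :=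
  localCohomology.diagram (localCohomology.idealPowersDiagram I) q ⋙ (evaluation _ _).obj M

/-- Evaluation at `M` commutes with the colimit defining `localCohomology`. -/
def localCohomologyIsoColimit :
    (localCohomology I q).obj M ≅ colimit (localCohomologyDiagram I q M) :=
  colimitObjIsoColimitCompEvaluation _ _

/-- The terms of `localCohomologyDiagram` in terms of `Abelian.Ext`. -/
def extEquivDiagramObj (s : ℕ) :
    Abelian.Ext.{u} (ModuleCat.of R (R ⧸ I ^ s)) M q ≃ₗ[R]
      (localCohomologyDiagram I q M).obj (op (op s)) :=
  extEquivDerivedExt (ModuleCat.of R (R ⧸ I ^ s)) M q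

instance preservesColimit_localCohomologyDiagram :
    PreservesColimit (localCohomologyDiagram I q M) (forget (ModuleCat.{u} R)) := by
  have hfiltered : PreservesFilteredColimitsOfSize.{0, 0} (forget (ModuleCat.{u} R)) :=
    preservesFilteredColimitsOfSize_shrink.{0, u, 0, u} _
  have hshape := hfiltered.preserves_filtered_colimits ℕᵒᵖᵒᵖ
  infer_instance

lemma localCohomologyDiagram_map_extEquivDiagramObj {s s' : ℕ} (h : s ≤ s')
    (w : op (op s) ⟶ op (op s')) (x : Abelian.Ext.{u} (ModuleCat.of R (R ⧸ I ^ s)) M q) :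
    ((localCohomologyDiagram I q M).map w).hom (extEquivDiagramObj I q M s x) =
      extEquivDiagramObj I q M s' (extQuotientPowMap I q M h x) :=
  derivedExtMap_extEquivDerivedExt (quotientPowMap I h) M q x

/-- The canonical map `Ext^q(R ⧸ I ^ s, M) → H^q_I(M)`. -/
def extToLocalCohomology (s : ℕ) :
    Abelian.Ext.{u} (ModuleCat.of R (R ⧸ I ^ s)) M q →ₗ[R] (localCohomology I q).obj M :=
  (colimit.ι (localCohomologyDiagram I q M) (op (op s)) ≫
    (localCohomologyIsoColimit I q M).inv).hom ∘ₗ (extEquivDiagramObj I q M s).toLinearMap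

lemma extToLocalCohomology_apply (s : ℕ)
    (x : Abelian.Ext.{u} (ModuleCat.of R (R ⧸ I ^ s)) M q) :
    extToLocalCohomology I q M s x = (localCohomologyIsoColimit I q M).inv.hom
      ((colimit.ι (localCohomologyDiagram I q M) (op (op s))).hom
        (extEquivDiagramObj I q M s x)) :=
  rfl

lemma extToLocalCohomology_extQuotientPowMap {s s' : ℕ} (h : s ≤ s')
    (x : Abelian.Ext.{u} (ModuleCat.of R (R ⧸ I ^ s)) M q) :
    extToLocalCohomology I q M s' (extQuotientPowMap I q M h x) =
      extToLocalCohomology I q M s x := by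
  let w : op (op s) ⟶ op (op s') := (homOfLE h).op.op
  rw [extToLocalCohomology_apply, extToLocalCohomology_apply,
    ← localCohomologyDiagram_map_extEquivDiagramObj I q M h w]
  congr 1
  exact congrArg (fun f ↦ f.hom (extEquivDiagramObj I q M s x))
    (colimit.w (localCohomologyDiagram I q M) w)

lemma exists_extToLocalCohomology_eq (c : (localCohomology I q).obj M) :
    ∃ s x, extToLocalCohomology I q M s x = c := by
  obtain ⟨⟨⟨s⟩⟩, y, hy⟩ := Concrete.colimit_exists_rep (localCohomologyDiagram I q M)
    ((localCohomologyIsoColimit I q M).hom.hom c)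
  obtain ⟨x, rfl⟩ := (extEquivDiagramObj I q M s).surjective y
  exact ⟨s, x, (congrArg (localCohomologyIsoColimit I q M).inv.hom hy).trans
    (congrArg (fun f ↦ f.hom c) (localCohomologyIsoColimit I q M).hom_inv_id)⟩

lemma exists_extQuotientPowMap_eq_zero {s : ℕ}
    {x : Abelian.Ext.{u} (ModuleCat.of R (R ⧸ I ^ s)) M q}
    (hx : extToLocalCohomology I q M s x = 0) :
    ∃ s', ∃ h : s ≤ s', extQuotientPowMap I q M h x = 0 := by
  have hι : (colimit.ι (localCohomologyDiagram I q M) (op (op s))).hom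
      (extEquivDiagramObj I q M s x) =
        (colimit.ι (localCohomologyDiagram I q M) (op (op s))).hom 0 := by
    apply (localCohomologyIsoColimit I q M).toLinearEquiv.symm.injective
    rw [map_zero, map_zero]
    exact hx
  obtain ⟨⟨⟨s'⟩⟩, f, g, hfg⟩ :=
    Concrete.colimit_exists_of_rep_eq (localCohomologyDiagram I q M) _ _ hι
  have hs : s ≤ s' := f.unop.unop.down.down
  refine ⟨s', hs, (extEquivDiagramObj I q M s').injective ?_⟩
  rw [map_zero, ← localCohomologyDiagram_map_extEquivDiagramObj I q M hs f]
  exact hfg.trans (map_zero _)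

end LocalCohomologyColimit

section LocalCohomologyTorsion

open Abelian

variable {R : Type u} [CommRing R]

/-- The map `R ⧸ K → Z` sending `1` to an element annihilated by `K`. -/
abbrev cyclicHom {Z : ModuleCat.{u} R} (K : Ideal R) (z : Z) (h : ∀ a ∈ K, a • z = 0) :
    ModuleCat.of R (R ⧸ K) ⟶ Z :=
  ModuleCat.ofHom (Submodule.liftQ K (LinearMap.toSpanSingleton R Z z) h)

lemma cyclicHom_one {Z : ModuleCat.{u} R} {K : Ideal R} (z : Z) (h : ∀ a ∈ K, a • z = 0) :
    (cyclicHom K z h).hom (Submodule.Quotient.mk 1) = z :=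
  one_smul R z

lemma eq_of_map_one_eq {Z : ModuleCat.{u} R} {K : Ideal R} {f g : ModuleCat.of R (R ⧸ K) ⟶ Z}
    (h : f.hom (Submodule.Quotient.mk 1) = g.hom (Submodule.Quotient.mk 1)) : f = g :=
  ModuleCat.hom_ext (Submodule.linearMap_qext _ (LinearMap.ext_ring h))

lemma smul_map_one_eq_zero {Z : ModuleCat.{u} R} {K : Ideal R} (f : ModuleCat.of R (R ⧸ K) ⟶ Z) :
    ∀ a ∈ K, a • f.hom (Submodule.Quotient.mk 1) = 0 := by
  intro a ha
  have hone : a • (Submodule.Quotient.mk 1 : R ⧸ K) = 0 := by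
    rwa [← Submodule.Quotient.mk_smul, smul_eq_mul, mul_one, Submodule.Quotient.mk_eq_zero]
  exact (map_smul f.hom a _).symm.trans ((congrArg f.hom hone).trans (map_zero f.hom))

variable (I : Ideal R) (M : ModuleCat.{u} R) (q : ℕ)

/-- The class in `Ext^q(R ⧸ K, M)` of an element of the `q`-th cosyzygy annihilated by `K`. -/
def cyclicExtClass (K : Ideal R) (z : (cosyzygy M q : ModuleCat.{u} R))
    (h : ∀ a ∈ K, a • z = 0) : Abelian.Ext.{u} (ModuleCat.of R (R ⧸ K)) M q :=
  (Ext.mk₀ (cyclicHom K z h)).comp (cosyzygyExtClass M q) (zero_add q)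

variable {M q}

lemma extQuotientPowMap_cyclicExtClass {s s' : ℕ} (hs : s ≤ s')
    (z : (cosyzygy M q : ModuleCat.{u} R)) (h : ∀ a ∈ I ^ s, a • z = 0)
    (h' : ∀ a ∈ I ^ s', a • z = 0) :
    extQuotientPowMap I q M hs (cyclicExtClass M q _ z h) = cyclicExtClass M q _ z h' := by
  rw [cyclicExtClass, cyclicExtClass, extQuotientPowMap,
    ← Ext.comp_assoc _ _ _ (zero_add 0) (zero_add q) (zero_add _), Ext.mk₀_comp_mk₀]
  congr 2
  exact eq_of_map_one_eq ((cyclicHom_one z h).trans (cyclicHom_one z h').symm)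

lemma extToLocalCohomology_cyclicExtClass_eq {s s' : ℕ} (z : (cosyzygy M q : ModuleCat.{u} R))
    (h : ∀ a ∈ I ^ s, a • z = 0) (h' : ∀ a ∈ I ^ s', a • z = 0) :
    extToLocalCohomology I q M s (cyclicExtClass M q _ z h) =
      extToLocalCohomology I q M s' (cyclicExtClass M q _ z h') := by
  wlog hs : s ≤ s' generalizing s s'
  · exact (this h' h (by omega)).symm
  rw [← extQuotientPowMap_cyclicExtClass I hs z h h', extToLocalCohomology_extQuotientPowMap]

lemma cyclicExtClass_add {K : Ideal R} {z z' : (cosyzygy M q : ModuleCat.{u} R)}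
    (h : ∀ a ∈ K, a • z = 0) (h' : ∀ a ∈ K, a • z' = 0) (hadd : ∀ a ∈ K, a • (z + z') = 0) :
    cyclicExtClass M q K (z + z') hadd =
      cyclicExtClass M q K z h + cyclicExtClass M q K z' h' := by
  rw [cyclicExtClass, cyclicExtClass, cyclicExtClass, ← Ext.add_comp, ← Ext.mk₀_add]
  congr 2
  apply eq_of_map_one_eq
  rw [cyclicHom_one, ModuleCat.hom_add, LinearMap.add_apply, cyclicHom_one, cyclicHom_one]

lemma cyclicExtClass_smul {K : Ideal R} (r : R) {z : (cosyzygy M q : ModuleCat.{u} R)}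
    (h : ∀ a ∈ K, a • z = 0) (hsmul : ∀ a ∈ K, a • (r • z) = 0) :
    cyclicExtClass M q K (r • z) hsmul = r • cyclicExtClass M q K z h := by
  rw [cyclicExtClass, cyclicExtClass, ← Ext.smul_comp, ← Ext.mk₀_smul]
  congr 2
  apply eq_of_map_one_eq
  rw [cyclicHom_one, ModuleCat.hom_smul, LinearMap.smul_apply, cyclicHom_one]

variable [IsNoetherianRing R]

lemma exists_pow_smul_torsionCosyzygy_eq_zero (z : torsionCosyzygy I M q) :
    ∃ s, ∀ a ∈ I ^ s, a • z.1 = 0 :=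
  exists_pow_smul_eq_zero_of_mem_idealTorsion z.2

variable (M q)

/-- The map `Γ_I(Z^q) → H^q_I(M)` sending `z` to the image of its class in `Ext^q(R ⧸ I ^ s, M)`,
for any `s` such that `I ^ s` annihilates `z`. -/
def torsionToLocalCohomology : torsionCosyzygy I M q →ₗ[R] (localCohomology I q).obj M where
  toFun z := extToLocalCohomology I q M _
    (cyclicExtClass M q _ z.1 (exists_pow_smul_torsionCosyzygy_eq_zero I z).choose_spec)
  map_add' x y := by
    have hx := (exists_pow_smul_torsionCosyzygy_eq_zero I x).choose_spec
    have hy := (exists_pow_smul_torsionCosyzygy_eq_zero I y).choose_spec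
    set s := (exists_pow_smul_torsionCosyzygy_eq_zero I x).choose
    set s' := (exists_pow_smul_torsionCosyzygy_eq_zero I y).choose
    have hx' : ∀ a ∈ I ^ max s s', a • x.1 = 0 :=
      fun a ha ↦ hx a (Ideal.pow_le_pow_right (le_max_left _ _) ha)
    have hy' : ∀ a ∈ I ^ max s s', a • y.1 = 0 :=
      fun a ha ↦ hy a (Ideal.pow_le_pow_right (le_max_right _ _) ha)
    have hxy : ∀ a ∈ I ^ max s s', a • (x.1 + y.1) = 0 :=
      fun a ha ↦ by rw [smul_add, hx' a ha, hy' a ha, add_zero]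
    rw [extToLocalCohomology_cyclicExtClass_eq I _ hx hx',
      extToLocalCohomology_cyclicExtClass_eq I _ hy hy', ← map_add,
      ← cyclicExtClass_add hx' hy' hxy]
    exact extToLocalCohomology_cyclicExtClass_eq I _ _ _
  map_smul' r x := by
    have hx := (exists_pow_smul_torsionCosyzygy_eq_zero I x).choose_spec
    have hrx : ∀ a ∈ I ^ (exists_pow_smul_torsionCosyzygy_eq_zero I x).choose, a • (r • x.1) = 0 :=
      fun a ha ↦ by rw [smul_comm, hx a ha, smul_zero]
    rw [RingHom.id_apply, ← map_smul, ← cyclicExtClass_smul r hx hrx]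
    exact extToLocalCohomology_cyclicExtClass_eq I _ _ _

lemma torsionToLocalCohomology_apply (z : torsionCosyzygy I M q) {s : ℕ}
    (h : ∀ a ∈ I ^ s, a • z.1 = 0) :
    torsionToLocalCohomology I M q z =
      extToLocalCohomology I q M s (cyclicExtClass M q _ z.1 h) :=
  extToLocalCohomology_cyclicExtClass_eq I _ _ _

lemma torsionToLocalCohomology_surjective :
    Function.Surjective (torsionToLocalCohomology I M q) := by
  intro c
  obtain ⟨s, x, rfl⟩ := exists_extToLocalCohomology_eq I q M c
  obtain ⟨y, rfl⟩ := exists_comp_cosyzygyExtClass_eq (zero_add q) x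
  obtain ⟨f, rfl⟩ := (Ext.mk₀_bijective _ _).2 y
  have hf := smul_map_one_eq_zero f
  refine ⟨⟨f.hom (Submodule.Quotient.mk 1), mem_idealTorsion_of_pow s hf⟩, ?_⟩
  rw [torsionToLocalCohomology_apply I M q _ hf, cyclicExtClass,
    eq_of_map_one_eq (cyclicHom_one _ hf)]

lemma torsionToLocalCohomology_torsionπ (e : torsionUnder I M q) :
    torsionToLocalCohomology I M (q + 1) (torsionπ I M q e) = 0 := by
  obtain ⟨s, hs⟩ := exists_pow_smul_eq_zero_of_mem_idealTorsion e.2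
  have hπ : (cyclicHom (I ^ s) e.1 hs ≫ cosyzygyπ M q).hom (Submodule.Quotient.mk 1) =
      (cosyzygyπ M q).hom e.1 := congrArg (cosyzygyπ M q).hom (cyclicHom_one _ hs)
  have hz : ∀ a ∈ I ^ s, a • (cosyzygyπ M q).hom e.1 = 0 :=
    hπ ▸ smul_map_one_eq_zero (cyclicHom (I ^ s) e.1 hs ≫ cosyzygyπ M q)
  have hclass : cyclicExtClass M (q + 1) (I ^ s) _ hz = 0 :=
    (mk₀_comp_cosyzygyExtClass_succ_eq_zero_iff _).2
      ⟨_, eq_of_map_one_eq (hπ.trans (cyclicHom_one _ hz).symm)⟩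
  exact (torsionToLocalCohomology_apply I M (q + 1) _ hz).trans
    ((congrArg (extToLocalCohomology I (q + 1) M s) hclass).trans (map_zero _))

lemma ker_torsionToLocalCohomology :
    LinearMap.ker (torsionToLocalCohomology I M (q + 1)) = LinearMap.range (torsionπ I M q) := by
  refine le_antisymm (fun z hz ↦ ?_) ?_
  · obtain ⟨s, hs⟩ := exists_pow_smul_torsionCosyzygy_eq_zero I z
    rw [LinearMap.mem_ker, torsionToLocalCohomology_apply I M (q + 1) z hs] at hz
    obtain ⟨s', hs', hz⟩ := exists_extQuotientPowMap_eq_zero I (q + 1) M hz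
    have hz' : ∀ a ∈ I ^ s', a • z.1 = 0 := fun a ha ↦ hs a (Ideal.pow_le_pow_right hs' ha)
    rw [extQuotientPowMap_cyclicExtClass I hs' z.1 hs hz'] at hz
    obtain ⟨w, hw⟩ := (mk₀_comp_cosyzygyExtClass_succ_eq_zero_iff _).1 hz
    exact ⟨⟨w.hom (Submodule.Quotient.mk 1), mem_idealTorsion_of_pow s' (smul_map_one_eq_zero w)⟩,
      Subtype.ext ((congrArg (fun f ↦ f.hom (Submodule.Quotient.mk 1)) hw).trans
        (cyclicHom_one z.1 hz'))⟩
  · rintro _ ⟨e, rfl⟩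
    exact torsionToLocalCohomology_torsionπ I M q e

/-- `Γ_I(Z^{q+1}) / im Γ_I(E^q)` is the local cohomology module `H^{q+1}_I(M)`. -/
def torsionCohomologyIso : torsionCohomology I M q ≅ (localCohomology I (q + 1)).obj M :=
  (Submodule.quotEquivOfEq _ _ (ker_torsionToLocalCohomology I M q).symm ≪≫ₗ
    (torsionToLocalCohomology I M (q + 1)).quotKerEquivOfSurjective
      (torsionToLocalCohomology_surjective I M (q + 1))).toModuleIso

end LocalCohomologyTorsion

section LyubeznikNumber

open Abelian

variable {R : Type u} [CommRing R]

lemma extLength_eq_of_iso (L : ModuleCat.{u} R) {M N : ModuleCat.{u} R} (φ : M ≅ N) (i : ℕ) :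
    extLength L M i = extLength L N i := by
  refine (LinearEquiv.ofLinearMap (Ext.postcompOfLinear (Ext.mk₀ φ.hom) R L (add_zero i))
    (Ext.postcompOfLinear (Ext.mk₀ φ.inv) R L (add_zero i)) ?_ ?_).length_eq
  · ext x
    change (x.comp (Ext.mk₀ _) (add_zero i)).comp (Ext.mk₀ _) (add_zero i) = x
    rw [Ext.comp_assoc_of_second_deg_zero, Ext.mk₀_comp_mk₀, Iso.inv_hom_id, Ext.comp_mk₀_id]
  · ext x
    change (x.comp (Ext.mk₀ _) (add_zero i)).comp (Ext.mk₀ _) (add_zero i) = x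
    rw [Ext.comp_assoc_of_second_deg_zero, Ext.mk₀_comp_mk₀, Iso.hom_inv_id, Ext.comp_mk₀_id]

lemma lyubeznikNumber_eq_extLength [IsNoetherianRing R] [IsLocalRing R] (I : Ideal R) {n i : ℕ}
    (h : i + 2 ≤ n) :
    lyubeznikNumber R I n i (i + 1) = extLength (ModuleCat.of R (ResidueField R))
      (torsionCohomology I (ModuleCat.of R R) (n - i - 2)) i := by
  have hq : n - (i + 1) = n - i - 2 + 1 := by omega
  rw [lyubeznikNumber, ← Module.coe_length, lyubeznikModule, hq,
    extLength_eq_of_iso _ (torsionCohomologyIso I _ _)]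
  exact congrArg _ (extEquivDerivedExt _ _ i).length_eq.symm

end LyubeznikNumber

/-! ### Regular local rings -/

section RegularIdeal

/-- `IsRegularIdeal i K` says that `K` is generated by a weakly regular sequence of length `i`.
The unit ideal is not excluded. -/
inductive IsRegularIdeal {R : Type*} [CommRing R] : ℕ → Ideal R → Prop
  | bot : IsRegularIdeal 0 ⊥
  | sup_span {i : ℕ} {K : Ideal R} {f : R} (hK : IsRegularIdeal i K)
      (hf : IsSMulRegular (R ⧸ K) f) : IsRegularIdeal (i + 1) (K ⊔ Ideal.span {f})

variable {R S : Type*} [CommRing R] [CommRing S]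

lemma comap_sup_span_singleton {g : R →+* S} (hg : Function.Surjective g) (K : Ideal S) (f : R) :
    (K ⊔ Ideal.span {g f}).comap g = K.comap g ⊔ Ideal.span {f} := by
  have hmap : K ⊔ Ideal.span {g f} = (K.comap g ⊔ Ideal.span {f}).map g := by
    rw [Ideal.map_sup, Ideal.map_comap_of_surjective g hg, Ideal.map_span, Set.image_singleton]
  rw [hmap, Ideal.comap_map_of_surjective g hg, sup_eq_left]
  exact (Ideal.comap_mono bot_le).trans le_sup_left

lemma IsRegularIdeal.comap {g : R →+* S} (hg : Function.Surjective g) {x : R}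
    (hker : RingHom.ker g = Ideal.span {x}) (hx : IsSMulRegular R x) {i : ℕ} {K : Ideal S}
    (hK : IsRegularIdeal i K) : IsRegularIdeal (i + 1) (K.comap g) := by
  induction hK with
  | bot =>
    rw [← RingHom.ker_eq_comap_bot, hker, ← bot_sup_eq (Ideal.span {x})]
    refine .sup_span .bot ((isSMulRegular_quotient_iff_mem_of_smul_mem _ _).2 fun a ha ↦ ?_)
    exact hx.right_eq_zero_of_smul ha
  | @sup_span _ _ f _ hf ih =>
    obtain ⟨f, rfl⟩ := hg f
    rw [comap_sup_span_singleton hg]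
    refine .sup_span ih ((isSMulRegular_quotient_iff_mem_of_smul_mem _ _).2 fun a ha ↦ ?_)
    exact mem_of_isSMulRegular_quotient_of_smul_mem hf (x := g a) (by simpa using ha)

end RegularIdeal

section RegularLocal

variable {R : Type*} [CommRing R] [IsLocalRing R]

lemma exists_mem_maximalIdeal_notMem {p : Ideal R} (hp : p ≠ ⊤) (hne : p ≠ maximalIdeal R) :
    ∃ x ∈ maximalIdeal R, x ∉ p :=
  SetLike.not_le_iff_exists.1 fun h ↦ hne (le_antisymm (le_maximalIdeal hp) h)

lemma maximalIdeal_le_span_sup_span_erase [DecidableEq R] {s : Finset R}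
    (hs : Ideal.span (s : Set R) = maximalIdeal R) {x : R} (hx : x ∈ maximalIdeal R)
    (hx2 : x ∉ maximalIdeal R ^ 2) :
    ∃ y ∈ s, maximalIdeal R ≤ Ideal.span {x} ⊔ Ideal.span (s.erase y : Set R) := by
  obtain ⟨c, -, hc⟩ := Submodule.mem_span_finset.1 (hs ▸ hx)
  obtain ⟨y, hy, hunit⟩ : ∃ y ∈ s, IsUnit (c y) := by
    by_contra! hc_nonunit
    refine hx2 (hc ▸ pow_two (maximalIdeal R) ▸ Ideal.sum_mem _ fun y hy ↦ ?_)
    exact Ideal.mul_mem_mul ((mem_maximalIdeal _).2 (hc_nonunit y hy)) (hs ▸ Ideal.subset_span hy)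
  refine ⟨y, hy, hs ▸ Ideal.span_le.2 fun z hz ↦ ?_⟩
  obtain rfl | hzy := eq_or_ne z y
  · rw [← Finset.add_sum_erase _ _ hy] at hc
    refine (Ideal.unit_mul_mem_iff_mem _ hunit).1 ?_
    rw [show c z * z = x - ∑ a ∈ s.erase z, c a • a from eq_sub_of_add_eq hc]
    exact Ideal.sub_mem _ (Ideal.mem_sup_left (Ideal.mem_span_singleton_self x))
      (Ideal.mem_sup_right (Ideal.sum_mem _ fun a ha ↦
        Ideal.mul_mem_left _ _ (Ideal.subset_span ha)))
  · exact Ideal.mem_sup_right (Ideal.subset_span (Finset.mem_erase.2 ⟨hzy, hz⟩))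

lemma maximalIdeal_notMem_minimalPrimes (h : 0 < ringKrullDim R) :
    maximalIdeal R ∉ minimalPrimes R := fun hmin ↦ by
  rw [← maximalIdeal_height_eq_ringKrullDim, Ideal.height_eq_zero_iff.2 hmin] at h
  exact lt_irrefl _ h

lemma comap_mk_maximalIdeal (I : Ideal R) [IsLocalRing (R ⧸ I)] :
    (maximalIdeal (R ⧸ I)).comap (Ideal.Quotient.mk I) = maximalIdeal R :=
  have := IsLocalHom.of_surjective (Ideal.Quotient.mk I) Ideal.Quotient.mk_surjective
  maximalIdeal_comap _

lemma span_image_mk_eq_maximalIdeal {I : Ideal R} [IsLocalRing (R ⧸ I)] {s : Set R}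
    (hs : Ideal.span s ≤ maximalIdeal R) (hle : maximalIdeal R ≤ I ⊔ Ideal.span s) :
    Ideal.span (Ideal.Quotient.mk I '' s) = maximalIdeal (R ⧸ I) := by
  rw [← Ideal.map_comap_of_surjective _ Ideal.Quotient.mk_surjective (maximalIdeal (R ⧸ I)),
    comap_mk_maximalIdeal, ← Ideal.map_span]
  refine le_antisymm (Ideal.map_mono hs) ((Ideal.map_mono hle).trans_eq ?_)
  rw [Ideal.map_sup, Ideal.map_quotient_self, bot_sup_eq]

variable [IsNoetherianRing R]

lemma not_maximalIdeal_le_sq (h : maximalIdeal R ≠ ⊥) : ¬ maximalIdeal R ≤ maximalIdeal R ^ 2 :=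
  fun hle ↦ h (Submodule.eq_bot_of_le_smul_of_le_jacobson_bot (maximalIdeal R) _
    (IsNoetherian.noetherian _) (by rwa [smul_eq_mul, ← pow_two]) (maximalIdeal_le_jacobson _))

lemma exists_mem_maximalIdeal_notMem_sq_notMem_minimalPrimes (h : 0 < ringKrullDim R) :
    ∃ x ∈ maximalIdeal R, x ∉ maximalIdeal R ^ 2 ∧ ∀ p ∈ minimalPrimes R, x ∉ p := by
  have hfin := minimalPrimes.finite_of_isNoetherianRing R
  have hmin := maximalIdeal_notMem_minimalPrimes h
  by_contra! hc
  have hcover : (maximalIdeal R : Set R) ⊆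
      ⋃ I ∈ insert (maximalIdeal R ^ 2) (minimalPrimes R), (I : Set R) := fun x hx ↦ by
    rw [Set.biUnion_insert]
    exact or_iff_not_imp_left.2 fun hx2 ↦ by simpa using hc x hx hx2
  obtain ⟨I, rfl | hI, hle⟩ := (Ideal.subset_union_prime_finite (hfin.insert _)
    (maximalIdeal R ^ 2) (maximalIdeal R ^ 2)
    fun I hI hne _ ↦ ((Set.mem_insert_iff.1 hI).resolve_left hne).1.1).1 hcover
  · refine not_maximalIdeal_le_sq (fun hbot ↦ hmin ?_) hle
    rw [hbot]
    have : (⊥ : Ideal R).IsPrime := hbot ▸ inferInstance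
    exact ⟨⟨this, le_rfl⟩, fun _ _ _ ↦ bot_le⟩
  · exact hmin (le_antisymm hle (le_maximalIdeal hI.1.1.ne_top) ▸ hI)

/-- Nakayama: a minimal prime `q ⊆ (x)` not containing `x` satisfies `q = x q`. -/
lemma isDomain_of_isPrime_span_singleton {x : R} (hx : x ∈ maximalIdeal R)
    (hprime : (Ideal.span {x}).IsPrime) (hmin : ∀ p ∈ minimalPrimes R, x ∉ p) : IsDomain R := by
  obtain ⟨q, hq, hqx⟩ := Ideal.exists_minimalPrimes_le (I := ⊥) (J := Ideal.span {x}) bot_le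
  have hq_prime : q.IsPrime := hq.1.1
  have hq_bot : q = ⊥ := by
    refine Submodule.eq_bot_of_le_smul_of_le_jacobson_bot (maximalIdeal R) _
      (IsNoetherian.noetherian _) (fun a ha ↦ ?_) (maximalIdeal_le_jacobson _)
    obtain ⟨b, rfl⟩ := Ideal.mem_span_singleton'.1 (hqx ha)
    exact mul_comm b x ▸
      Submodule.smul_mem_smul hx ((hq_prime.mem_or_mem ha).resolve_right (hmin q hq))
  subst hq_bot
  exact IsDomain.of_bot_isPrime R

lemma le_ringKrullDim_quotient_span_singleton {x : R} (hx : x ∈ maximalIdeal R) {n : ℕ}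
    (hn : ((n + 1 : ℕ) : WithBot ℕ∞) ≤ ringKrullDim R) :
    (n : WithBot ℕ∞) ≤ ringKrullDim (R ⧸ Ideal.span {x}) := by
  have hdim := ringKrullDim_le_ringKrullDim_quotient_add_card (R := R) {x}
    (by simpa [ringJacobson_eq_maximalIdeal] using hx)
  rw [Finset.coe_singleton, Finset.card_singleton] at hdim
  exact ENat.WithBot.add_le_add_natCast_right_iff.mp (by exact_mod_cast hn.trans hdim)

theorem isDomain_and_isRegularIdeal_maximalIdeal (n : ℕ) :
    ∀ (R : Type*) [CommRing R] [IsLocalRing R] [IsNoetherianRing R] (s : Finset R),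
      s.card ≤ n → Ideal.span (s : Set R) = maximalIdeal R → (n : WithBot ℕ∞) ≤ ringKrullDim R →
      IsDomain R ∧ IsRegularIdeal n (maximalIdeal R) := by
  classical
  induction n with
  | zero =>
    intro R _ _ _ s hcard hs _
    have hbot : maximalIdeal R = ⊥ := by
      rw [← hs, Finset.card_eq_zero.1 (Nat.le_zero.1 hcard), Finset.coe_empty, Ideal.span_empty]
    exact ⟨(isField_iff_maximalIdeal_eq.2 hbot).isDomain, hbot ▸ .bot⟩
  | succ n ih =>
    intro R _ _ _ s hcard hs hdim
    obtain ⟨x, hx, hx2, hmin⟩ := exists_mem_maximalIdeal_notMem_sq_notMem_minimalPrimes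
      (lt_of_lt_of_le (by exact_mod_cast n.succ_pos) hdim)
    obtain ⟨y, hy, hle⟩ := maximalIdeal_le_span_sup_span_erase hs hx hx2
    have : Nontrivial (R ⧸ Ideal.span {x}) := Ideal.Quotient.nontrivial_iff.2
      fun h ↦ hx (Ideal.span_singleton_eq_top.1 h)
    have : IsLocalRing (R ⧸ Ideal.span {x}) :=
      .of_surjective' (Ideal.Quotient.mk _) Ideal.Quotient.mk_surjective
    have hspan := span_image_mk_eq_maximalIdeal
      ((Ideal.span_mono (s.erase_subset y)).trans_eq hs) hle
    rw [← Finset.coe_image] at hspan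
    have hcard' : ((s.erase y).image (Ideal.Quotient.mk (Ideal.span {x}))).card ≤ n :=
      Finset.card_image_le.trans (by rw [Finset.card_erase_of_mem hy]; omega)
    obtain ⟨hdom, hreg⟩ :=
      ih _ _ hcard' hspan (le_ringKrullDim_quotient_span_singleton hx hdim)
    have hR := isDomain_of_isPrime_span_singleton hx
      ((Ideal.Quotient.isDomain_iff_prime _).1 hdom) hmin
    have hx0 : x ≠ 0 := fun h ↦ hx2 (h ▸ zero_mem _)
    rw [← comap_mk_maximalIdeal (Ideal.span {x})]
    exact ⟨hR, hreg.comap Ideal.Quotient.mk_surjective Ideal.mk_ker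
      (IsRegular.of_ne_zero hx0).left.isSMulRegular⟩

lemma isRegularIdeal_maximalIdeal (hR : IsRegularLocal R) {n : ℕ} (hn : ringKrullDim R = n) :
    IsRegularIdeal n (maximalIdeal R) := by
  obtain ⟨s, hs, hdim⟩ := hR
  have hcard : s.card = n := by exact_mod_cast hdim.symm.trans hn
  exact (isDomain_and_isRegularIdeal_maximalIdeal n R s hcard.le hs hn.ge).2

end RegularLocal

/-! ### Ext and regular sequences -/

section ExtSubsingleton

open Abelian

universe w v

variable {C : Type*} [Category.{v} C] [Abelian C] [HasExt.{w} C]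

lemma subsingleton_ext_of_iso_left {X X' : C} (e : X ≅ X') (Y : C) {i : ℕ}
    (h : Subsingleton (Ext.{w} X' Y i)) : Subsingleton (Ext.{w} X Y i) :=
  (((extFunctor i).mapIso e.op).app Y).addCommGroupIsoToAddEquiv.symm.subsingleton_congr.2 h

lemma subsingleton_ext_of_iso_right (X : C) {Y Y' : C} (e : Y ≅ Y') {i : ℕ}
    (h : Subsingleton (Ext.{w} X Y' i)) : Subsingleton (Ext.{w} X Y i) :=
  ((extFunctorObj X i).mapIso e).addCommGroupIsoToAddEquiv.subsingleton_congr.2 h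

lemma subsingleton_ext_X₂ {S : ShortComplex C} (hS : S.ShortExact) {Y : C} {i : ℕ}
    (h₁ : Subsingleton (Ext.{w} S.X₁ Y i)) (h₃ : Subsingleton (Ext.{w} S.X₃ Y i)) :
    Subsingleton (Ext.{w} S.X₂ Y i) :=
  subsingleton_of_forall_eq 0 fun x ↦ by
    obtain ⟨y, rfl⟩ := Ext.contravariant_sequence_exact₂ hS Y x (Subsingleton.elim _ _)
    rw [Subsingleton.elim y 0, Ext.comp_zero]

variable {R : Type u} [CommRing R]

lemma subsingleton_ext_of_forall_mem_support [IsNoetherianRing R] (Y : ModuleCat.{u} R) (i : ℕ)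
    (L : Type u) [AddCommGroup L] [Module R L] [hL : Module.Finite R L]
    (h : ∀ p ∈ Module.support R L,
      Subsingleton (Ext.{u} (ModuleCat.of R (R ⧸ p.asIdeal)) Y i)) :
    Subsingleton (Ext.{u} (ModuleCat.of R L) Y i) := by
  revert h
  refine IsNoetherianRing.induction_on_isQuotientEquivQuotientPrime R hL
    (motive := fun N _ _ _ ↦ (∀ p ∈ Module.support R N,
      Subsingleton (Ext.{u} (ModuleCat.of R (R ⧸ p.asIdeal)) Y i)) →
      Subsingleton (Ext.{u} (ModuleCat.of R N) Y i)) ?_ ?_ ?_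
  · intro N _ _ _ _ _
    exact subsingleton_of_forall_eq 0 fun x ↦ by
      rw [← Ext.mk₀_id_comp x, (ModuleCat.isZero_of_subsingleton _).eq_of_src (𝟙 _) 0,
        Ext.mk₀_zero, Ext.zero_comp]
  · intro N _ _ _ p e h
    refine subsingleton_ext_of_iso_left e.toModuleIso Y (h p ?_)
    rw [e.support_eq, Module.mem_support_iff_of_finite, Ideal.annihilator_quotient]
  · intro N₁ _ _ _ N₂ _ _ _ N₃ _ _ _ f g hf hg hfg h₁ h₃ h
    exact subsingleton_ext_X₂ (ModuleCat.shortComplex_shortExact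
      (ModuleCat.shortComplexOfCompEqZero f g hfg.linearMap_comp_eq_zero) hfg hf hg)
      (h₁ fun p hp ↦ h p (Module.support_subset_of_injective f hf hp))
      (h₃ fun p hp ↦ h p (Module.support_subset_of_surjective g hg hp))

lemma subsingleton_ext_quotient_of_forall_isPrime [IsNoetherianRing R] (K : Ideal R)
    (Y : ModuleCat.{u} R) (i : ℕ)
    (h : ∀ p : Ideal R, p.IsPrime → K ≤ p → Subsingleton (Ext.{u} (ModuleCat.of R (R ⧸ p)) Y i)) :
    Subsingleton (Ext.{u} (ModuleCat.of R (R ⧸ K)) Y i) :=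
  subsingleton_ext_of_forall_mem_support Y i _ fun p hp ↦ h p.asIdeal p.isPrime <| by
    rwa [Module.mem_support_iff_of_finite, Ideal.annihilator_quotient] at hp

lemma smul_ext_eq_zero_of_mem_annihilator {L Y : ModuleCat.{u} R} {i : ℕ} {r : R}
    (hr : r ∈ Module.annihilator R L) (x : Ext.{u} L Y i) : r • x = 0 := by
  have hzero : r • 𝟙 L = 0 :=
    ModuleCat.hom_ext (LinearMap.ext fun y ↦ Module.mem_annihilator.1 hr y)
  rw [← Ext.mk₀_id_comp x, ← Ext.smul_comp, ← Ext.mk₀_smul, hzero, Ext.mk₀_zero, Ext.zero_comp]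

end ExtSubsingleton

section QuotientSMul

open Abelian

variable {R : Type u} [CommRing R]

lemma factor_comp_lsmul_eq_zero (K : Ideal R) (f : R) :
    Submodule.factor (le_sup_left : K ≤ K ⊔ Ideal.span {f}) ∘ₗ LinearMap.lsmul R (R ⧸ K) f = 0 := by
  ext
  exact (Submodule.Quotient.mk_eq_zero _).2
    (Ideal.mem_sup_right (by simp))

/-- The sequence `0 → R ⧸ K → R ⧸ K → R ⧸ (K + (f)) → 0` given by multiplication by `f`. -/
abbrev quotientSMulShortComplex (K : Ideal R) (f : R) : ShortComplex (ModuleCat.{u} R) :=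
  ModuleCat.shortComplexOfCompEqZero (LinearMap.lsmul R (R ⧸ K) f)
    (Submodule.factor (le_sup_left : K ≤ K ⊔ Ideal.span {f})) (factor_comp_lsmul_eq_zero K f)

variable {K : Ideal R} {f : R}

lemma quotientSMulShortComplex_shortExact (hf : IsSMulRegular (R ⧸ K) f) :
    (quotientSMulShortComplex K f).ShortExact := by
  refine ModuleCat.shortComplex_shortExact _ (fun x ↦ ⟨fun hx ↦ ?_, ?_⟩) hf
    (Submodule.factor_surjective le_sup_left)
  · obtain ⟨x, rfl⟩ := Submodule.Quotient.mk_surjective _ x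
    obtain ⟨a, ha, b, hb, rfl⟩ := Submodule.mem_sup.1 ((Submodule.Quotient.mk_eq_zero _).1 hx)
    obtain ⟨c, rfl⟩ := Ideal.mem_span_singleton'.1 hb
    refine ⟨Submodule.Quotient.mk c, (Submodule.Quotient.eq _).2 ?_⟩
    rw [show f • c - (a + c * f) = -a by rw [smul_eq_mul]; ring]
    exact neg_mem ha
  · rintro ⟨y, rfl⟩
    exact LinearMap.congr_fun (factor_comp_lsmul_eq_zero K f) y

lemma quotientSMulShortComplex_f :
    (quotientSMulShortComplex K f).f = f • 𝟙 (ModuleCat.of R (R ⧸ K)) :=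
  ModuleCat.hom_ext (LinearMap.ext fun _ ↦ rfl)

lemma comp_mk₀_quotientSMul {L : ModuleCat.{u} R} {i : ℕ}
    (x : Ext.{u} L (ModuleCat.of R (R ⧸ K)) i) :
    x.comp (Ext.mk₀ (quotientSMulShortComplex K f).f) (add_zero i) = f • x := by
  rw [quotientSMulShortComplex_f, Ext.smul_eq_comp_mk₀]

lemma exists_smul_eq_of_extClass_comp_eq_zero (hf : IsSMulRegular (R ⧸ K) f)
    {Y : ModuleCat.{u} R} {i j : ℕ} (hj : 1 + i = j) {x : Ext.{u} (ModuleCat.of R (R ⧸ K)) Y i}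
    (hx : (quotientSMulShortComplex_shortExact hf).extClass.comp x hj = 0) :
    ∃ y, f • y = x := by
  obtain ⟨y, hy⟩ := Ext.contravariant_sequence_exact₁
    (quotientSMulShortComplex_shortExact hf) Y x hj hx
  refine ⟨y, ?_⟩
  rw [← hy, quotientSMulShortComplex_f, Ext.mk₀_smul, Ext.smul_comp, Ext.mk₀_id_comp]

end QuotientSMul

section RegularIdealExt

open Abelian

variable {R : Type u} [CommRing R]

/-- The isomorphism `R ⧸ 0 ≅ R` of `R`-modules. -/
abbrev quotientBotIso (R : Type u) [CommRing R] :
    ModuleCat.of R (R ⧸ (⊥ : Ideal R)) ≅ ModuleCat.of R R :=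
  ((⊥ : Submodule R R).quotEquivOfEqBot rfl).toModuleIso

variable {i : ℕ} {K : Ideal R}

lemma IsRegularIdeal.subsingleton_ext_of_subsingleton_ext_quotient (hK : IsRegularIdeal i K)
    (N : ModuleCat.{u} R) (m : ℕ) (hN : K ≤ Module.annihilator R N)
    (h : ∀ j < m, Subsingleton (Ext.{u} N (ModuleCat.of R (R ⧸ K)) j)) (j : ℕ) (hj : j < m + i) :
    Subsingleton (Ext.{u} N (ModuleCat.of R R) j) := by
  induction hK generalizing m with
  | bot => exact subsingleton_ext_of_iso_right N (quotientBotIso R).symm (h j hj)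
  | @sup_span i K f _ hf ih =>
    refine ih (m + 1) (le_sup_left.trans hN) (fun j hj ↦ ?_) (by omega)
    refine subsingleton_of_forall_eq 0 fun x ↦ ?_
    have hS := quotientSMulShortComplex_shortExact hf
    have hx : x.comp (Ext.mk₀ (quotientSMulShortComplex K f).f) (add_zero j) = 0 :=
      (comp_mk₀_quotientSMul x).trans (smul_ext_eq_zero_of_mem_annihilator
        (hN (Ideal.mem_sup_right (Ideal.mem_span_singleton_self f))) x)
    cases j with
    | zero =>
      obtain ⟨a, rfl⟩ := (Ext.mk₀_bijective _ _).2 x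
      rw [Ext.mk₀_comp_mk₀, ← Ext.mk₀_zero] at hx
      have := hS.mono_f
      rw [Limits.zero_of_comp_mono _ ((Ext.mk₀_bijective _ _).1 hx), Ext.mk₀_zero]
    | succ j =>
      obtain ⟨y, rfl⟩ := Ext.covariant_sequence_exact₁ N hS x hx rfl
      have := h j (by omega)
      rw [Subsingleton.elim y 0, Ext.zero_comp]

lemma IsRegularIdeal.subsingleton_ext (hK : IsRegularIdeal i K) (N : ModuleCat.{u} R)
    (hN : K ≤ Module.annihilator R N) {j : ℕ} (hj : j < i) :
    Subsingleton (Ext.{u} N (ModuleCat.of R R) j) :=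
  hK.subsingleton_ext_of_subsingleton_ext_quotient N 0 hN (fun j hj ↦ absurd hj j.not_lt_zero) j
    (by omega)

lemma IsRegularIdeal.subsingleton_ext_quotient (hK : IsRegularIdeal i K) (L : ModuleCat.{u} R)
    {s : ℕ} (hs : ∀ q < s, Subsingleton (Ext.{u} L (ModuleCat.of R R) q)) {q : ℕ} (hq : q + i < s) :
    Subsingleton (Ext.{u} L (ModuleCat.of R (R ⧸ K)) q) := by
  induction hK generalizing q with
  | bot => exact subsingleton_ext_of_iso_right L (quotientBotIso R) (hs q hq)
  | sup_span _ hf ih =>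
    refine subsingleton_of_forall_eq 0 fun x ↦ ?_
    have := ih (q := q) (by omega)
    have := ih (q := q + 1) (by omega)
    obtain ⟨y, rfl⟩ := Ext.covariant_sequence_exact₃ L (quotientSMulShortComplex_shortExact hf) x
      rfl (Subsingleton.elim _ _)
    rw [Subsingleton.elim y 0, Ext.zero_comp]

lemma IsRegularIdeal.exists_ext_postcomp_injective (hK : IsRegularIdeal i K) :
    ∃ κ : Ext.{u} (ModuleCat.of R (R ⧸ K)) (ModuleCat.of R R) i,
      ∀ (L : ModuleCat.{u} R) (j s : ℕ) (hs : j + i = s),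
        (∀ q < s, Subsingleton (Ext.{u} L (ModuleCat.of R R) q)) →
        ∀ x : Ext.{u} L (ModuleCat.of R (R ⧸ K)) j, x.comp κ hs = 0 → x = 0 := by
  induction hK with
  | bot =>
    refine ⟨Ext.mk₀ (quotientBotIso R).hom, fun L j s hs _ x hx ↦ ?_⟩
    obtain rfl : j = s := hs
    rw [← Ext.comp_mk₀_id x, ← (quotientBotIso R).hom_inv_id, ← Ext.mk₀_comp_mk₀,
      ← Ext.comp_assoc (a₁₂ := j) (a₂₃ := 0) x _ _ (add_zero j) (zero_add 0) (by omega), hx,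
      Ext.zero_comp]
  | @sup_span i K f hK hf ih =>
    obtain ⟨κ, hκ⟩ := ih
    have hS := quotientSMulShortComplex_shortExact hf
    refine ⟨hS.extClass.comp κ (add_comm 1 i), fun L j s hs hL x hx ↦ ?_⟩
    rw [← Ext.comp_assoc (a₁₂ := j + 1) (a₂₃ := i + 1) _ _ _ rfl (by omega) (by omega)] at hx
    obtain ⟨y, rfl⟩ := Ext.covariant_sequence_exact₃ L hS x rfl
      (hκ L (j + 1) s (by omega) hL _ hx)
    have := hK.subsingleton_ext_quotient L hL (q := j) (by omega)
    rw [Subsingleton.elim y 0, Ext.zero_comp]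

lemma IsRegularIdeal.subsingleton_ext_self_of_lt (hK : IsRegularIdeal i K) {j : ℕ} (hj : i < j) :
    Subsingleton (Ext.{u} (ModuleCat.of R (R ⧸ K)) (ModuleCat.of R R) j) := by
  induction hK generalizing j with
  | bot =>
    obtain ⟨j, rfl⟩ := Nat.exists_eq_add_of_lt hj
    have : Projective (ModuleCat.of R R) :=
      ModuleCat.projective_of_free (Module.Basis.singleton Unit R)
    exact subsingleton_ext_of_iso_left (quotientBotIso R) _ (Ext.subsingleton_of_projective _ _ _)
  | sup_span _ hf ih =>
    obtain ⟨j, rfl⟩ := Nat.exists_eq_add_of_le' (Nat.one_le_of_lt hj)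
    refine subsingleton_of_forall_eq 0 fun x ↦ ?_
    have := ih (j := j) (by omega)
    have := ih (j := j + 1) (by omega)
    obtain ⟨y, rfl⟩ := Ext.contravariant_sequence_exact₃ (quotientSMulShortComplex_shortExact hf)
      _ x (Subsingleton.elim _ _) (add_comm 1 j)
    rw [Subsingleton.elim y 0, Ext.comp_zero]

lemma IsRegularIdeal.exists_forall_exists_smul_eq (hK : IsRegularIdeal i K) :
    ∃ κ : Ext.{u} (ModuleCat.of R (R ⧸ K)) (ModuleCat.of R R) i, ∀ x, ∃ r : R, r • κ = x := by
  induction hK with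
  | bot =>
    refine ⟨Ext.mk₀ (quotientBotIso R).hom, fun x ↦ ?_⟩
    obtain ⟨a, rfl⟩ := (Ext.mk₀_bijective _ _).2 x
    refine ⟨a.hom (Submodule.Quotient.mk 1), ?_⟩
    rw [← Ext.mk₀_smul]
    exact congrArg _ (eq_of_map_one_eq (mul_one _))
  | @sup_span i K f hK hf ih =>
    obtain ⟨κ, hκ⟩ := ih
    have hS := quotientSMulShortComplex_shortExact hf
    refine ⟨hS.extClass.comp κ (add_comm 1 i), fun x ↦ ?_⟩
    have := hK.subsingleton_ext_self_of_lt i.lt_succ_self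
    obtain ⟨y, rfl⟩ := Ext.contravariant_sequence_exact₃ hS _ x (Subsingleton.elim _ _)
      (add_comm 1 i)
    obtain ⟨r, rfl⟩ := hκ y
    exact ⟨r, (Ext.comp_smul _ _ _ r).symm⟩

lemma extLength_residueField_self_le_one [IsLocalRing R] {n : ℕ}
    (hn : IsRegularIdeal n (maximalIdeal R)) :
    extLength (ModuleCat.of R (ResidueField R)) (ModuleCat.of R R) n ≤ 1 := by
  obtain ⟨κ, hκ⟩ := hn.exists_forall_exists_smul_eq
  let g := Submodule.liftQ (maximalIdeal R) (LinearMap.toSpanSingleton R _ κ) fun r hr ↦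
    smul_ext_eq_zero_of_mem_annihilator (Ideal.annihilator_quotient.ge hr) κ
  have hg : Function.Surjective g := fun x ↦
    let ⟨r, hr⟩ := hκ x
    ⟨Submodule.Quotient.mk r, hr⟩
  have : IsSimpleModule R (R ⧸ maximalIdeal R) :=
    isSimpleModule_iff_isCoatom.2 Ideal.IsMaximal.out
  exact (Module.length_le_of_surjective g hg).trans_eq (Module.length_eq_one _ _)

end RegularIdealExt

/-! ### Vanishing below the codimension -/

section QuotientDimension

variable {R : Type*} [CommRing R]

lemma ringKrullDim_quotient_anti {K K' : Ideal R} (h : K ≤ K') :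
    ringKrullDim (R ⧸ K') ≤ ringKrullDim (R ⧸ K) :=
  ringKrullDim_le_of_surjective (Ideal.Quotient.factor h) (Ideal.Quotient.factor_surjective h)

lemma ringKrullDim_quotient_sup_span_add_one_le {K : Ideal R} {f : R}
    (hf : IsSMulRegular (R ⧸ K) f) :
    ringKrullDim (R ⧸ (K ⊔ Ideal.span {f})) + 1 ≤ ringKrullDim (R ⧸ K) := by
  have hreg : Ideal.Quotient.mk K f ∈ nonZeroDivisors (R ⧸ K) :=
    mem_nonZeroDivisors_iff_left.2 fun x hx ↦
      hf.right_eq_zero_of_smul ((Algebra.smul_def f x).trans hx)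
  have e := DoubleQuot.quotQuotEquivQuotSup K (Ideal.span {f})
  rw [Ideal.map_span, Set.image_singleton] at e
  exact ringKrullDim_eq_of_ringEquiv e ▸ ringKrullDim_quotient_succ_le_of_nonZeroDivisor hreg

lemma IsRegularIdeal.ringKrullDim_quotient_add_le {i : ℕ} {K : Ideal R}
    (hK : IsRegularIdeal i K) : ringKrullDim (R ⧸ K) + i ≤ ringKrullDim R := by
  induction hK with
  | bot => simpa using ringKrullDim_quotient_le (⊥ : Ideal R)
  | sup_span _ hf ih =>
    refine le_trans ?_ ih
    rw [Nat.cast_succ, add_comm (_ : WithBot ℕ∞) 1, ← add_assoc]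
    exact add_le_add_left (ringKrullDim_quotient_sup_span_add_one_le hf) _

lemma exists_isRegularIdeal_le_forall_not_isSMulRegular {P : Ideal R} {n d : ℕ}
    (hn : ringKrullDim R = n) (hd : (d : WithBot ℕ∞) ≤ ringKrullDim (R ⧸ P)) :
    ∃ i K, i + d ≤ n ∧ IsRegularIdeal i K ∧ K ≤ P ∧ ∀ f ∈ P, ¬ IsSMulRegular (R ⧸ K) f := by
  have hbound : ∀ i K, IsRegularIdeal i K → K ≤ P → i + d ≤ n := fun i K hK hKP ↦ by
    have hle : (d : WithBot ℕ∞) + i ≤ n :=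
      (add_le_add_left (hd.trans (ringKrullDim_quotient_anti hKP)) _).trans
        (hn ▸ hK.ringKrullDim_quotient_add_le)
    rw [add_comm]
    exact_mod_cast hle
  by_contra! hc
  have hlong : ∀ i, ∃ K, IsRegularIdeal i K ∧ K ≤ P := fun i ↦ by
    induction i with
    | zero => exact ⟨⊥, .bot, bot_le⟩
    | succ i ih =>
      obtain ⟨K, hK, hKP⟩ := ih
      obtain ⟨f, hf, hreg⟩ := hc i K (hbound i K hK hKP) hK hKP
      exact ⟨_, hK.sup_span hreg, sup_le hKP ((Ideal.span_singleton_le_iff_mem _).2 hf)⟩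
  obtain ⟨K, hK, hKP⟩ := hlong (n + 1)
  have := hbound _ _ hK hKP
  omega

lemma eq_maximalIdeal_of_ringKrullDim_quotient_le_zero [IsLocalRing R] (p : Ideal R) [p.IsPrime]
    (h : ringKrullDim (R ⧸ p) ≤ 0) : p = maximalIdeal R :=
  have : Ring.KrullDimLE 0 (R ⧸ p) := Ring.krullDimLE_iff.2 h
  eq_maximalIdeal (Ideal.Quotient.maximal_of_isField p Ring.KrullDimLE.isField_of_isDomain)

end QuotientDimension

section Vanishing

open Abelian

variable {R : Type u} [CommRing R] [IsLocalRing R] [IsNoetherianRing R]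

lemma subsingleton_ext_quotient_of_sup_span {K : Ideal R} {f : R} (hfm : f ∈ maximalIdeal R)
    (hf : IsSMulRegular (R ⧸ K) f) (Y : ModuleCat.{u} R) [Module.Finite R Y] {q : ℕ}
    (h : Subsingleton (Ext.{u} (ModuleCat.of R (R ⧸ (K ⊔ Ideal.span {f}))) Y (q + 1))) :
    Subsingleton (Ext.{u} (ModuleCat.of R (R ⧸ K)) Y q) := by
  rw [← Submodule.subsingleton_iff R, ← subsingleton_iff_bot_eq_top, eq_comm]
  refine Submodule.eq_bot_of_le_smul_of_le_jacobson_bot (maximalIdeal R) _ Module.Finite.fg_top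
    (fun x _ ↦ ?_) (maximalIdeal_le_jacobson _)
  obtain ⟨y, rfl⟩ := exists_smul_eq_of_extClass_comp_eq_zero hf (add_comm 1 q) (x := x)
    (Subsingleton.elim _ _)
  exact Submodule.smul_mem_smul hfm Submodule.mem_top

lemma subsingleton_ext_quotient_of_ringKrullDim_le {n : ℕ}
    (hn : IsRegularIdeal n (maximalIdeal R)) {K : Ideal R} {r q : ℕ}
    (hK : ringKrullDim (R ⧸ K) ≤ r) (hq : q + r < n) :
    Subsingleton (Ext.{u} (ModuleCat.of R (R ⧸ K)) (ModuleCat.of R R) q) := by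
  induction r generalizing K q with
  | zero =>
    refine subsingleton_ext_quotient_of_forall_isPrime K _ q fun p _ hKp ↦ ?_
    rw [eq_maximalIdeal_of_ringKrullDim_quotient_le_zero p
      ((ringKrullDim_quotient_anti hKp).trans hK)]
    exact hn.subsingleton_ext _ Ideal.annihilator_quotient.ge (by omega)
  | succ r ih =>
    refine subsingleton_ext_quotient_of_forall_isPrime K _ q fun p hp hKp ↦ ?_
    obtain rfl | hpm := eq_or_ne p (maximalIdeal R)
    · exact hn.subsingleton_ext _ Ideal.annihilator_quotient.ge (by omega)
    obtain ⟨x, hx, hxp⟩ := exists_mem_maximalIdeal_notMem hp.ne_top hpm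
    have hreg : IsSMulRegular (R ⧸ p) x := (isSMulRegular_quotient_iff_mem_of_smul_mem _ _).2
      fun a ha ↦ (hp.mem_or_mem ha).resolve_left hxp
    refine subsingleton_ext_quotient_of_sup_span hx hreg _ (ih ?_ (by omega))
    have hdim := (ringKrullDim_quotient_sup_span_add_one_le hreg).trans
      ((ringKrullDim_quotient_anti hKp).trans hK)
    exact (ENat.WithBot.add_le_add_natCast_right_iff (c := 1)).1 (by exact_mod_cast hdim)

end Vanishing

/-! ### Non-vanishing -/

section Nonvanishing

open Abelian

variable {R : Type u} [CommRing R]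

lemma idealTorsion_eq_top_of_le_annihilator {J : Ideal R} {L : Type*} [AddCommGroup L]
    [Module R L] (h : J ≤ Module.annihilator R L) : idealTorsion J L = ⊤ :=
  Submodule.eq_top_iff'.2 fun x ↦ mem_idealTorsion_of_pow 1 fun _ ha ↦
    Module.mem_annihilator.1 (h (Ideal.pow_le_self one_ne_zero ha)) x

lemma exists_mk₀_comp_torsionExtClass_eq {J : Ideal R} {L M : ModuleCat.{u} R}
    (hL : idealTorsion J L = ⊤) {q : ℕ} (x : Ext.{u} L M q) :
    ∃ c : L ⟶ torsionCosyzygy J M q,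
      (Ext.mk₀ c).comp (torsionExtClass J M q) (zero_add q) = x := by
  obtain ⟨y, rfl⟩ := exists_comp_cosyzygyExtClass_eq (zero_add q) x
  obtain ⟨b, rfl⟩ := (Ext.mk₀_bijective _ _).2 y
  refine ⟨ModuleCat.ofHom (b.hom.codRestrict _ fun z ↦
    map_mem_idealTorsion b.hom (hL ▸ Submodule.mem_top)), ?_⟩
  rw [← Ext.comp_assoc (a₁₂ := 0) (a₂₃ := q) _ _ _ (zero_add 0) (zero_add q) (by omega),
    Ext.mk₀_comp_mk₀]
  rfl

variable [IsNoetherianRing R]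

lemma exists_ext_zero_comp_torsionExtClass_ne_zero {J P K : Ideal R} (hJP : J ≤ P) {i : ℕ}
    (hK : IsRegularIdeal i K) (hKP : K ≤ P) (hP : ∀ f ∈ P, ¬ IsSMulRegular (R ⧸ K) f) :
    ∃ α : Ext.{u} (ModuleCat.of R (R ⧸ K)) (torsionCosyzygy J (ModuleCat.of R R) i) 0,
      α.comp (torsionExtClass J (ModuleCat.of R R) i) (zero_add i) ≠ 0 := by
  have hann : Module.annihilator R (R ⧸ P) = P := Ideal.annihilator_quotient
  obtain ⟨b, hb⟩ : ∃ b : (R ⧸ P) →ₗ[R] (R ⧸ K), b ≠ 0 := by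
    by_contra! h
    obtain ⟨f, hf, hreg⟩ :=
      IsSMulRegular.subsingleton_linearMap_iff.1 (subsingleton_of_forall_eq 0 h)
    exact hP f (hann ▸ hf) hreg
  obtain ⟨κ, hκ⟩ := hK.exists_ext_postcomp_injective
  obtain ⟨c, hc⟩ := exists_mk₀_comp_torsionExtClass_eq
    (idealTorsion_eq_top_of_le_annihilator (hJP.trans hann.ge))
    ((Ext.mk₀ (ModuleCat.ofHom b)).comp κ (zero_add i))
  let π : ModuleCat.of R (R ⧸ K) ⟶ ModuleCat.of R (R ⧸ P) :=
    ModuleCat.ofHom (Submodule.factor hKP)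
  have : Epi π := (ModuleCat.epi_iff_surjective _).2 (Submodule.factor_surjective hKP)
  refine ⟨Ext.mk₀ (π ≫ c), fun hzero ↦ hb ?_⟩
  have hπb : (Ext.mk₀ (π ≫ ModuleCat.ofHom b)).comp κ (zero_add i) = 0 := by
    rw [← hzero, ← Ext.mk₀_comp_mk₀, ← Ext.mk₀_comp_mk₀,
      Ext.comp_assoc (a₁₂ := 0) (a₂₃ := i) _ _ _ (by omega) (by omega) (by omega), ← hc,
      Ext.comp_assoc (a₁₂ := 0) (a₂₃ := i) _ _ _ (by omega) (by omega) (by omega)]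
  have hcomp := hκ _ 0 i (zero_add i)
    (fun q ↦ hK.subsingleton_ext _ Ideal.annihilator_quotient.ge) _ hπb
  rw [← Ext.mk₀_zero] at hcomp
  exact congrArg ModuleCat.Hom.hom
    (Limits.zero_of_epi_comp π ((Ext.mk₀_bijective _ _).1 hcomp))

variable [IsLocalRing R]

lemma exists_mem_maximalIdeal_isSMulRegular_quotient {n s : ℕ}
    (hn : IsRegularIdeal n (maximalIdeal R)) {K : Ideal R} (hK : IsRegularIdeal s K)
    (hs : s < n) : ∃ y ∈ maximalIdeal R, IsSMulRegular (R ⧸ K) y := by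
  have hann : Module.annihilator R (R ⧸ maximalIdeal R) = maximalIdeal R :=
    Ideal.annihilator_quotient
  have hExt := hK.subsingleton_ext_quotient (ModuleCat.of R (R ⧸ maximalIdeal R))
    (fun q ↦ hn.subsingleton_ext _ hann.ge) (q := 0) (by omega)
  have hHom : Subsingleton ((R ⧸ maximalIdeal R) →ₗ[R] (R ⧸ K)) :=
    ModuleCat.homEquiv.symm.subsingleton_congr.2 (Ext.addEquiv₀.subsingleton_congr.1 hExt)
  exact hann ▸ IsSMulRegular.subsingleton_linearMap_iff.1 hHom

lemma exists_notMem_maximalIdeal_pow_smul_top {M : Type*} [AddCommGroup M] [Module R M]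
    [Module.Finite R M] {x : M} (hx : x ≠ 0) :
    ∃ N : ℕ, x ∉ maximalIdeal R ^ N • (⊤ : Submodule R M) := by
  by_contra! h
  have hmem := (Submodule.mem_iInf _).2 h
  rw [Ideal.iInf_pow_smul_eq_bot_of_isLocalRing _ (maximalIdeal.isMaximal R).ne_top] at hmem
  exact hx hmem

/-- A high power `f` of a regular element does not divide the given nonzero class in
`Ext(R ⧸ K, R)`, so that the connecting map into `Ext(R ⧸ (K + (f)), R)` does not kill it. -/
lemma exists_ext_succ_comp_ne_zero {n : ℕ} (hn : IsRegularIdeal n (maximalIdeal R))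
    {Z : ModuleCat.{u} R} {i : ℕ} (ζ : Ext.{u} Z (ModuleCat.of R R) i) {j s : ℕ} (hs : j + i = s)
    (hsn : s < n) {K : Ideal R} (hK : IsRegularIdeal s K)
    (α : Ext.{u} (ModuleCat.of R (R ⧸ K)) Z j) (hα : α.comp ζ hs ≠ 0) :
    ∃ K' : Ideal R, IsRegularIdeal (s + 1) K' ∧
      ∃ α' : Ext.{u} (ModuleCat.of R (R ⧸ K')) Z (j + 1),
        α'.comp ζ (show j + 1 + i = s + 1 by omega) ≠ 0 := by
  obtain ⟨y, hy, hreg⟩ := exists_mem_maximalIdeal_isSMulRegular_quotient hn hK hsn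
  obtain ⟨N, hN⟩ := exists_notMem_maximalIdeal_pow_smul_top (R := R) hα
  have hregN : IsSMulRegular (R ⧸ K) (y ^ N) := hreg.pow N
  refine ⟨_, hK.sup_span hregN,
    (quotientSMulShortComplex_shortExact hregN).extClass.comp α (add_comm 1 j), fun hzero ↦ hN ?_⟩
  rw [Ext.comp_assoc (a₁₂ := j + 1) (a₂₃ := s) _ _ _ (by omega) (by omega) (by omega)] at hzero
  obtain ⟨z, hz⟩ := exists_smul_eq_of_extClass_comp_eq_zero hregN (by omega) hzero
  exact hz ▸ Submodule.smul_mem_smul (Ideal.pow_mem_pow hy N) Submodule.mem_top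

lemma exists_isRegularIdeal_ext_comp_ne_zero {n : ℕ} (hn : IsRegularIdeal n (maximalIdeal R))
    {Z : ModuleCat.{u} R} {i : ℕ} (ζ : Ext.{u} Z (ModuleCat.of R R) i) {K : Ideal R}
    (hK : IsRegularIdeal i K) (α : Ext.{u} (ModuleCat.of R (R ⧸ K)) Z 0)
    (hα : α.comp ζ (zero_add i) ≠ 0) {j s : ℕ} (hs : j + i = s) (hsn : s ≤ n) :
    ∃ K' : Ideal R, IsRegularIdeal s K' ∧
      ∃ α' : Ext.{u} (ModuleCat.of R (R ⧸ K')) Z j, α'.comp ζ hs ≠ 0 := by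
  induction j generalizing s with
  | zero =>
    obtain rfl : i = s := by omega
    exact ⟨K, hK, α, hα⟩
  | succ j ih =>
    obtain ⟨s, rfl⟩ : ∃ s', s = s' + 1 := ⟨s - 1, by omega⟩
    obtain ⟨K', hK', α', hα'⟩ := ih (s := s) (by omega) (by omega)
    exact exists_ext_succ_comp_ne_zero hn ζ _ (by omega) hK' α' hα'

lemma IsRegularIdeal.subsingleton_ext_of_residueField {n : ℕ} (hdim : ringKrullDim R = n)
    {K : Ideal R} (hK : IsRegularIdeal n K) {Y : ModuleCat.{u} R} {i : ℕ}
    (h : Subsingleton (Ext.{u} (ModuleCat.of R (ResidueField R)) Y i)) :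
    Subsingleton (Ext.{u} (ModuleCat.of R (R ⧸ K)) Y i) := by
  refine subsingleton_ext_quotient_of_forall_isPrime K Y i fun p _ hKp ↦ ?_
  have hle : ringKrullDim (R ⧸ K) ≤ 0 := (ENat.WithBot.add_le_add_natCast_right_iff (c := n)).1
    (by rw [zero_add]; exact hdim ▸ hK.ringKrullDim_quotient_add_le)
  rw [eq_maximalIdeal_of_ringKrullDim_quotient_le_zero p
    ((ringKrullDim_quotient_anti hKp).trans hle)]
  exact h

theorem not_subsingleton_ext_residueField_torsionCosyzygy {n : ℕ}
    (hn : IsRegularIdeal n (maximalIdeal R)) (hdim : ringKrullDim R = n) {J P : Ideal R}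
    (hJP : J ≤ P) {t : ℕ} (hP : ((t + 2 : ℕ) : WithBot ℕ∞) ≤ ringKrullDim (R ⧸ P)) :
    ¬ Subsingleton (Ext.{u} (ModuleCat.of R (ResidueField R))
      (torsionCosyzygy J (ModuleCat.of R R) (n - t - 2)) (t + 2)) := fun h ↦ by
  obtain ⟨i, K, hi, hK, hKP, hmax⟩ :=
    exists_isRegularIdeal_le_forall_not_isSMulRegular hdim hP
  rw [show n - t - 2 = i + (n - i - t - 2) by omega] at h
  obtain ⟨α, hα⟩ := exists_ext_zero_comp_torsionExtClass_ne_zero hJP hK hKP hmax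
  obtain ⟨K', hK', α', hα'⟩ := exists_isRegularIdeal_ext_comp_ne_zero hn
    (torsionExtClass J (ModuleCat.of R R) i) hK α hα (Nat.sub_add_cancel (by omega)) le_rfl
  obtain ⟨β, hβ⟩ := exists_comp_torsionExtClass_add_eq (n - i - t - 2)
    (i := t + 2) (by omega) (Nat.sub_add_cancel (by omega)) α'
  have := hK'.subsingleton_ext_of_residueField hdim h
  rw [Subsingleton.elim β 0, Ext.zero_comp] at hβ
  exact hα' hβ.symm

end Nonvanishing

/-! ### The Mayer–Vietoris inequality -/

section SubmoduleSup

open Abelian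

variable {R : Type u} [CommRing R] {Z : Type u} [AddCommGroup Z] [Module R Z]
  {N N' P : Submodule R Z}

lemma exact_inclusion_inf_mkQ (hN : N ≤ P) :
    Function.Exact (Submodule.inclusion (inf_le_left : N ⊓ N' ≤ N))
      ((N'.submoduleOf P).mkQ ∘ₗ Submodule.inclusion hN) := by
  intro x
  rw [LinearMap.comp_apply, Submodule.mkQ_apply, Submodule.Quotient.mk_eq_zero]
  exact ⟨fun hx ↦ ⟨⟨x, x.2, hx⟩, rfl⟩, by rintro ⟨z, rfl⟩; exact z.2.2⟩

lemma surjective_mkQ_comp_inclusion (hN : N ≤ P) (hP : P ≤ N ⊔ N') :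
    Function.Surjective ((N'.submoduleOf P).mkQ ∘ₗ Submodule.inclusion hN) := by
  intro w
  obtain ⟨⟨z, hz⟩, rfl⟩ := Submodule.mkQ_surjective _ w
  obtain ⟨x, hx, y, hy, rfl⟩ := Submodule.mem_sup.1 (hP hz)
  refine ⟨⟨x, hx⟩, (Submodule.Quotient.eq _).2 ?_⟩
  change x - (x + y) ∈ N'
  rw [sub_add_cancel_left]
  exact neg_mem hy

lemma eq_zero_of_comp_inclusion_add_comp_inclusion_eq_zero (hN : N ≤ P) (hN' : N' ≤ P)
    (hP : P ≤ N ⊔ N') {L : ModuleCat.{u} R} {i : ℕ}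
    (h : Subsingleton (Ext.{u} L (ModuleCat.of R ↥(N ⊓ N')) i))
    {x : Ext.{u} L (ModuleCat.of R N) i} {y : Ext.{u} L (ModuleCat.of R N') i}
    (hxy : x.comp (Ext.mk₀ (ModuleCat.ofHom (Submodule.inclusion hN))) (add_zero i) +
      y.comp (Ext.mk₀ (ModuleCat.ofHom (Submodule.inclusion hN'))) (add_zero i) = 0) :
    x = 0 := by
  have hS := ModuleCat.shortComplex_shortExact (ModuleCat.shortComplexOfCompEqZero _ _
      (exact_inclusion_inf_mkQ hN (N' := N')).linearMap_comp_eq_zero)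
    (exact_inclusion_inf_mkQ hN) (Submodule.inclusion_injective inf_le_left)
    (surjective_mkQ_comp_inclusion hN hP)
  let π := ModuleCat.ofHom (N'.submoduleOf P).mkQ
  have hπ : ModuleCat.ofHom (Submodule.inclusion hN') ≫ π = 0 :=
    ModuleCat.hom_ext (LinearMap.ext fun z ↦ (Submodule.Quotient.mk_eq_zero _).2 z.2)
  have hx : x.comp (Ext.mk₀ (ModuleCat.ofHom (Submodule.inclusion hN) ≫ π)) (add_zero i) = 0 := by
    have hxyπ := congrArg (fun w ↦ w.comp (Ext.mk₀ π) (add_zero i)) hxy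
    simpa only [Ext.add_comp, Ext.zero_comp, Ext.comp_assoc_of_third_deg_zero,
      Ext.mk₀_comp_mk₀, hπ, Ext.mk₀_zero, Ext.comp_zero, add_zero] using hxyπ
  obtain ⟨v, rfl⟩ := Ext.covariant_sequence_exact₂ L hS x hx
  rw [Subsingleton.elim v 0, Ext.zero_comp]

lemma extLength_add_extLength_le_of_le_sup (hN : N ≤ P) (hN' : N' ≤ P) (hP : P ≤ N ⊔ N')
    {L : ModuleCat.{u} R} {i : ℕ} (h : Subsingleton (Ext.{u} L (ModuleCat.of R ↥(N ⊓ N')) i)) :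
    extLength L (ModuleCat.of R N) i + extLength L (ModuleCat.of R N') i ≤
      extLength L (ModuleCat.of R P) i := by
  rw [← Module.length_prod]
  refine Module.length_le_of_injective (LinearMap.coprod
    (Ext.postcompOfLinear (Ext.mk₀ (ModuleCat.ofHom (Submodule.inclusion hN))) R L (add_zero i))
    (Ext.postcompOfLinear (Ext.mk₀ (ModuleCat.ofHom (Submodule.inclusion hN'))) R L (add_zero i)))
    (LinearMap.ker_eq_bot.1 (LinearMap.ker_eq_bot'.2 ?_))
  rintro ⟨x, y⟩ hxy
  exact Prod.ext (eq_zero_of_comp_inclusion_add_comp_inclusion_eq_zero hN hN' hP h hxy)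
    (eq_zero_of_comp_inclusion_add_comp_inclusion_eq_zero hN' hN (sup_comm N N' ▸ hP)
      (inf_comm N N' ▸ h) ((add_comm _ _).trans hxy))

end SubmoduleSup

section GradeGE

open Abelian

variable {R : Type u} [CommRing R]

/-- The `K`-grade of `M` is at least `g`, expressed by the vanishing of `Ext^q(R ⧸ 𝔞, M)` for
`q < g` and all ideals `𝔞` whose radical contains `K`. -/
def GradeGE (K : Ideal R) (M : ModuleCat.{u} R) (g : ℕ) : Prop :=
  ∀ 𝔞 : Ideal R, K ≤ 𝔞.radical → ∀ q < g, Subsingleton (Ext.{u} (ModuleCat.of R (R ⧸ 𝔞)) M q)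

namespace GradeGE

variable {K : Ideal R} {M : ModuleCat.{u} R} {g : ℕ}

lemma surjective_torsionπ (hK : GradeGE K M g) {q : ℕ} (hq : q + 1 < g) :
    Function.Surjective (torsionπ K M q) := by
  rintro ⟨z, hz⟩
  let 𝔞 := Ideal.torsionOf R (cosyzygy M (q + 1) : ModuleCat.{u} R) z
  have h𝔞 : ∀ a ∈ 𝔞, a • z = 0 := fun a ha ↦ (Ideal.mem_torsionOf_iff _ _).1 ha
  have := hK 𝔞 hz (q + 1) hq
  obtain ⟨w, hw⟩ := (mk₀_comp_cosyzygyExtClass_succ_eq_zero_iff (cyclicHom 𝔞 z h𝔞)).1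
    (Subsingleton.elim _ 0)
  refine ⟨⟨w.hom (Submodule.Quotient.mk 1), hz.trans (Ideal.radical_mono fun a ha ↦ ?_)⟩,
    Subtype.ext ?_⟩
  · exact (Ideal.mem_torsionOf_iff _ _).2 (smul_map_one_eq_zero w a ha)
  · exact (congrArg (fun f ↦ f.hom (Submodule.Quotient.mk 1)) hw).trans (cyclicHom_one z h𝔞)

lemma idealTorsion_eq_bot (hK : GradeGE K M g) (hg : 0 < g) : idealTorsion K M = ⊥ := by
  refine (Submodule.eq_bot_iff _).2 fun z hz ↦ ?_
  have hz0 : ∀ a ∈ Ideal.torsionOf R M z, a • z = 0 :=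
    fun a ha ↦ (Ideal.mem_torsionOf_iff _ _).1 ha
  have := hK _ hz 0 hg
  have hzero : cyclicHom _ z hz0 = 0 := (Ext.mk₀_bijective _ _).1 (Subsingleton.elim _ _)
  rw [← cyclicHom_one z hz0, hzero]
  rfl

lemma subsingleton_ext_torsionCosyzygy [IsNoetherianRing R] (hK : GradeGE K M g)
    (L : ModuleCat.{u} R) {q : ℕ} (hq : q < g) (i : ℕ) :
    Subsingleton (Ext.{u} L (torsionCosyzygy K M q) (i + 1)) := by
  induction q generalizing i with
  | zero =>
    have : Subsingleton (torsionCosyzygy K M 0) :=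
      Submodule.subsingleton_iff_eq_bot.2 (hK.idealTorsion_eq_bot hq)
    have := (ModuleCat.isZero_of_subsingleton (torsionCosyzygy K M 0)).injective
    exact Ext.subsingleton_of_injective _ _ _
  | succ q ih =>
    have := ih (by omega) (i + 1)
    have hexact := exact_idealTorsionMap K (injective_under_cosyzygy_hom M q)
      (exact_cosyzygy_hom M q)
    have hS := ModuleCat.shortComplex_shortExact
      (ModuleCat.shortComplexOfCompEqZero _ _ hexact.linearMap_comp_eq_zero) hexact
      (idealTorsionMap_injective K (injective_under_cosyzygy_hom M q))
      (hK.surjective_torsionπ hq)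
    refine subsingleton_of_forall_eq 0 fun x ↦ ?_
    obtain ⟨y, rfl⟩ := Ext.covariant_sequence_exact₃ L hS x rfl (Subsingleton.elim _ 0)
    rw [Ext.eq_zero_of_injective (I := torsionUnder K M q) y, Ext.zero_comp]

lemma idealTorsion_inf_cosyzygy_le [IsNoetherianRing R] {J J' : Ideal R}
    (hK : GradeGE (J ⊔ J') M g) {q : ℕ} (hq : q + 1 < g) :
    idealTorsion (J ⊓ J') (cosyzygy M q : ModuleCat.{u} R) ≤
      idealTorsion J (cosyzygy M q : ModuleCat.{u} R) ⊔
        idealTorsion J' (cosyzygy M q : ModuleCat.{u} R) := by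
  intro z hz
  have hinj := injective_under_cosyzygy_hom M q
  obtain ⟨a, ha, b, hb, hab⟩ := Submodule.mem_sup.1 (idealTorsion_inf_le_sup J J'
    (baer_under_cosyzygy M q) (map_mem_idealTorsion (Injective.ι (cosyzygy M q)).hom hz))
  have hπ : (cosyzygyπ M q).hom a = -(cosyzygyπ M q).hom b := by
    rw [eq_neg_iff_add_eq_zero, ← map_add, hab]
    exact (exact_cosyzygy_hom M q).apply_apply_eq_zero z
  have hπa : (cosyzygyπ M q).hom a ∈ idealTorsion (J ⊔ J') _ := by
    rw [idealTorsion_sup]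
    exact ⟨map_mem_idealTorsion _ ha, hπ ▸ neg_mem (map_mem_idealTorsion _ hb)⟩
  obtain ⟨⟨e, he⟩, hea⟩ := hK.surjective_torsionπ hq ⟨_, hπa⟩
  replace hea : (cosyzygyπ M q).hom e = (cosyzygyπ M q).hom a := congrArg Subtype.val hea
  rw [idealTorsion_sup] at he
  obtain ⟨x, hx⟩ := (exact_cosyzygy_hom M q (a - e)).1 (by rw [map_sub, hea, sub_self])
  obtain ⟨y, hy⟩ := (exact_cosyzygy_hom M q (b + e)).1 (by
    rw [map_add, hea, hπ, add_neg_cancel])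
  refine Submodule.mem_sup.2 ⟨x, mem_idealTorsion_of_map hinj (hx ▸ sub_mem ha he.1),
    y, mem_idealTorsion_of_map hinj (hy ▸ add_mem hb he.2), hinj ?_⟩
  rw [map_add, hx, hy, ← hab]
  abel

theorem extLength_torsionCosyzygy_add_le [IsNoetherianRing R] {J J' : Ideal R}
    (hK : GradeGE (J ⊔ J') M g) {q : ℕ} (hq : q + 1 < g) (L : ModuleCat.{u} R) (i : ℕ) :
    extLength L (torsionCosyzygy J M q) (i + 1) + extLength L (torsionCosyzygy J' M q) (i + 1) ≤
      extLength L (torsionCosyzygy (J ⊓ J') M q) (i + 1) := by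
  refine extLength_add_extLength_le_of_le_sup
    (idealTorsion_le_of_le_radical (inf_le_left.trans Ideal.le_radical))
    (idealTorsion_le_of_le_radical (inf_le_right.trans Ideal.le_radical))
    (hK.idealTorsion_inf_cosyzygy_le hq) ?_
  rw [← idealTorsion_sup]
  exact hK.subsingleton_ext_torsionCosyzygy L (by omega) i

end GradeGE

lemma ringKrullDim_quotient_le_of_le_radical {K K' : Ideal R} (h : K ≤ K'.radical) :
    ringKrullDim (R ⧸ K') ≤ ringKrullDim (R ⧸ K) := by
  rw [ringKrullDim_quotient, ringKrullDim_quotient, ← zeroLocus_radical K']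
  exact Order.krullDim_le_of_strictMono (Set.inclusion (zeroLocus_anti_mono h))
    fun _ _ hxy ↦ hxy

lemma gradeGE_of_ringKrullDim_quotient_le [IsLocalRing R] [IsNoetherianRing R] {n t : ℕ}
    (hn : IsRegularIdeal n (maximalIdeal R)) {K : Ideal R} (hK : ringKrullDim (R ⧸ K) ≤ t) :
    GradeGE K (ModuleCat.of R R) (n - t) :=
  fun _ h𝔞 _ hq ↦ subsingleton_ext_quotient_of_ringKrullDim_le hn
    ((ringKrullDim_quotient_le_of_le_radical h𝔞).trans hK) (by omega)

end GradeGE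

/-! ### Counting separated ideals -/

section Count

open Abelian

lemma le_radical_sup_finsetInf {ι : Type*} {R : Type*} [CommRing R] {J K : Ideal R}
    {𝔮 : ι → Ideal R} {T : Finset ι} (h : ∀ b ∈ T, J ≤ (K ⊔ 𝔮 b).radical) :
    J ≤ (K ⊔ T.inf 𝔮).radical := by
  rw [Ideal.radical_eq_sInf]
  refine le_sInf fun Q ⟨hle, hQ⟩ ↦ ?_
  obtain ⟨b, hb, hbQ⟩ := hQ.inf_le'.1 (le_sup_right.trans hle)
  exact (h b hb).trans (hQ.radical_le_iff.2 (sup_le (le_sup_left.trans hle) hbQ))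

variable {R : Type u} [CommRing R] [IsLocalRing R] [IsNoetherianRing R]

theorem card_le_extLength_torsionCosyzygy {n : ℕ} (hn : IsRegularIdeal n (maximalIdeal R))
    (hdim : ringKrullDim R = n) {t : ℕ} {J : Ideal R} (hJ : ringKrullDim (R ⧸ J) ≤ t)
    {ι : Type*} {𝔮 : ι → Ideal R}
    (h𝔮 : ∀ a, ∃ P : Ideal R, 𝔮 a ≤ P ∧ ((t + 2 : ℕ) : WithBot ℕ∞) ≤ ringKrullDim (R ⧸ P))
    (hsep : Pairwise fun a b ↦ J ≤ (𝔮 a ⊔ 𝔮 b).radical) (htn : t + 2 ≤ n) (T : Finset ι) :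
    (T.card : ℕ∞) ≤ extLength (ModuleCat.of R (ResidueField R))
      (torsionCosyzygy (T.inf 𝔮) (ModuleCat.of R R) (n - t - 2)) (t + 2) := by
  classical
  induction T using Finset.induction_on with
  | empty => simp
  | insert a T ha ih =>
    obtain ⟨P, haP, hP⟩ := h𝔮 a
    have hgrade : GradeGE (𝔮 a ⊔ T.inf 𝔮) (ModuleCat.of R R) (n - t) :=
      gradeGE_of_ringKrullDim_quotient_le hn ((ringKrullDim_quotient_le_of_le_radical
        (le_radical_sup_finsetInf fun b hb ↦ hsep (ne_of_mem_of_not_mem hb ha).symm)).trans hJ)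
    have hone : 1 ≤ extLength (ModuleCat.of R (ResidueField R))
        (torsionCosyzygy (𝔮 a) (ModuleCat.of R R) (n - t - 2)) (t + 2) :=
      Order.one_le_iff_ne_zero.2 fun h ↦ not_subsingleton_ext_residueField_torsionCosyzygy
        hn hdim haP hP (Module.length_eq_zero_iff.1 h)
    rw [Finset.inf_insert, Finset.card_insert_of_notMem ha, Nat.cast_succ, add_comm]
    exact (add_le_add hone ih).trans
      (hgrade.extLength_torsionCosyzygy_add_le (by omega) _ (t + 1))

theorem extLength_torsionCosyzygy_le_one_add_sum_lyubeznikNumber {n : ℕ}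
    (hn : IsRegularIdeal n (maximalIdeal R)) {I : Ideal R} (hI : I ≠ ⊤) {t : ℕ}
    (htn : t + 2 ≤ n) :
    (extLength (ModuleCat.of R (ResidueField R))
        (torsionCosyzygy I (ModuleCat.of R R) (n - t - 2)) (t + 2) : WithBot ℕ∞) ≤
      1 + ∑ i ∈ Finset.range (t + 1), lyubeznikNumber R I n i (i + 1) := by
  have htop : idealTorsion I (ResidueField R) = ⊤ := idealTorsion_eq_top_of_le_annihilator
    ((le_maximalIdeal hI).trans Ideal.annihilator_quotient.ge)
  have hsum : ∑ i ∈ Finset.range (t + 1), lyubeznikNumber R I n i (i + 1) =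
      ((∑ i ∈ Finset.range (t + 1), extLength (ModuleCat.of R (ResidueField R))
        (torsionCohomology I (ModuleCat.of R R) (n - i - 2)) i : ℕ∞) : WithBot ℕ∞) := by
    rw [WithBot.coe_sum]
    refine Finset.sum_congr rfl fun i hi ↦ lyubeznikNumber_eq_extLength I ?_
    have := Finset.mem_range.1 hi
    omega
  rw [hsum]
  exact_mod_cast (extLength_torsionCosyzygy_le_add_sum (ModuleCat.of R R) htop htn).trans
    (add_le_add_left (extLength_residueField_self_le_one hn) _)

theorem nat_card_le_one_add_sum_lyubeznikNumber (hreg : IsRegularLocal R) {n : ℕ}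
    (hn : ringKrullDim R = n) {I J : Ideal R} {t : ℕ} (hJ : ringKrullDim (R ⧸ J) ≤ t)
    {ι : Type*} [Finite ι] [Nonempty ι] {𝔮 : ι → Ideal R} (hI : I.radical = (⨅ a, 𝔮 a).radical)
    (h𝔮 : ∀ a, ∃ P : Ideal R, 𝔮 a ≤ P ∧ ((t + 2 : ℕ) : WithBot ℕ∞) ≤ ringKrullDim (R ⧸ P))
    (hsep : Pairwise fun a b ↦ J ≤ (𝔮 a ⊔ 𝔮 b).radical) :
    (Nat.card ι : WithBot ℕ∞) ≤
      1 + ∑ i ∈ Finset.range (t + 1), lyubeznikNumber R I n i (i + 1) := by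
  have := Fintype.ofFinite ι
  have hmax := isRegularIdeal_maximalIdeal hreg hn
  obtain ⟨a⟩ := ‹Nonempty ι›
  obtain ⟨P, haP, hP⟩ := h𝔮 a
  have htn : t + 2 ≤ n := by
    exact_mod_cast hP.trans ((ringKrullDim_quotient_le P).trans hn.le)
  have hItop : I ≠ ⊤ := by
    rintro rfl
    have hPtop : P = ⊤ := top_le_iff.1 (((Ideal.radical_eq_top.1 (hI.symm.trans
      (Ideal.radical_top R))).ge.trans (iInf_le 𝔮 a)).trans haP)
    subst hPtop
    have : Subsingleton (R ⧸ (⊤ : Ideal R)) := Ideal.Quotient.subsingleton_iff.2 rfl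
    rw [ringKrullDim_eq_bot_of_subsingleton] at hP
    exact absurd hP (by simp)
  have hcard := card_le_extLength_torsionCosyzygy hmax hn hJ h𝔮 hsep htn Finset.univ
  rw [Finset.inf_univ_eq_iInf, Finset.card_univ, ← Nat.card_eq_fintype_card, torsionCosyzygy,
    ← idealTorsion_eq_of_radical_eq hI] at hcard
  exact (WithBot.coe_le_coe.2 hcard).trans
    (extLength_torsionCosyzygy_le_one_add_sum_lyubeznikNumber hmax hItop htn)

end Count

/-! ### Connected components of an open subset of the spectrum -/

section ComponentIdeal

open TopologicalSpace

lemma finite_connectedComponents (X : Type*) [TopologicalSpace X] [NoetherianSpace X] :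
    Finite (_root_.ConnectedComponents X) := by
  have : Finite (irreducibleComponents X) := NoetherianSpace.finite_irreducibleComponents
  refine Finite.of_surjective
    (fun Z : irreducibleComponents X ↦ ConnectedComponents.mk Z.2.1.nonempty.some) fun y ↦ ?_
  obtain ⟨x, rfl⟩ := ConnectedComponents.surjective_coe y
  refine ⟨⟨irreducibleComponent x, irreducibleComponent_mem_irreducibleComponents x⟩, ?_⟩
  exact ConnectedComponents.coe_eq_coe'.2 (isIrreducible_irreducibleComponent.isConnected.2
    |>.subset_connectedComponent mem_irreducibleComponent (Set.Nonempty.some_mem _))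

variable {A : Type*} [CommRing A] {U : Set (PrimeSpectrum A)}

/-- The radical ideal defining the closure in `Spec A` of the connected component `a` of a
subset `U` of `Spec A`. -/
def componentIdeal (a : _root_.ConnectedComponents U) : Ideal A :=
  vanishingIdeal (Subtype.val '' (ConnectedComponents.mk ⁻¹' {a} : Set U))

lemma componentIdeal_mk_le {p : PrimeSpectrum A} (hp : p ∈ U) :
    componentIdeal (ConnectedComponents.mk (⟨p, hp⟩ : U)) ≤ p.asIdeal :=
  fun _ hr ↦ (mem_vanishingIdeal _ _).1 hr p ⟨_, rfl, rfl⟩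

lemma mk_eq_of_componentIdeal_le {a : _root_.ConnectedComponents U} {p : PrimeSpectrum A}
    (hp : p ∈ U) (h : componentIdeal a ≤ p.asIdeal) : ConnectedComponents.mk (⟨p, hp⟩ : U) = a := by
  have hclosed : IsClosed (ConnectedComponents.mk ⁻¹' {a} : Set U) :=
    isClosed_singleton.preimage ConnectedComponents.continuous_coe
  have hmem : p ∈ closure (Subtype.val '' (ConnectedComponents.mk ⁻¹' {a} : Set U)) := by
    rwa [← zeroLocus_vanishingIdeal_eq_closure]
  rw [← Set.mem_singleton_iff, ← Set.mem_preimage, ← hclosed.closure_eq, closure_subtype]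
  exact hmem

lemma le_radical_componentIdeal_sup {J : Ideal A}
    {a b : _root_.ConnectedComponents ((zeroLocus (J : Set A))ᶜ : Set (PrimeSpectrum A))}
    (hab : a ≠ b) : J ≤ (componentIdeal a ⊔ componentIdeal b).radical := by
  rw [Ideal.radical_eq_sInf]
  refine le_sInf fun Q ⟨hle, hQ⟩ ↦ ?_
  by_contra hJQ
  have hmem : (⟨Q, hQ⟩ : PrimeSpectrum A) ∈ ((zeroLocus (J : Set A))ᶜ : Set (PrimeSpectrum A)) :=
    hJQ
  exact hab ((mk_eq_of_componentIdeal_le hmem (le_sup_left.trans hle)).symm.trans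
    (mk_eq_of_componentIdeal_le hmem (le_sup_right.trans hle)))

lemma exists_mem_minimalPrimes_componentIdeal_le
    (hU : ∀ p : PrimeSpectrum A, p.asIdeal ∈ minimalPrimes A → p ∈ U)
    (a : _root_.ConnectedComponents U) : ∃ p ∈ minimalPrimes A, componentIdeal a ≤ p := by
  obtain ⟨x, rfl⟩ := ConnectedComponents.surjective_coe a
  obtain ⟨p, hp, hpx⟩ := Ideal.exists_minimalPrimes_le (bot_le : ⊥ ≤ x.1.asIdeal)
  have hpU : (⟨p, hp.1.1⟩ : PrimeSpectrum A) ∈ U := hU _ hp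
  refine ⟨p, hp, ?_⟩
  rw [mk_eq_of_componentIdeal_le x.2 ((componentIdeal_mk_le hpU).trans hpx)]
  exact componentIdeal_mk_le hpU

lemma radical_iInf_componentIdeal
    (hU : ∀ p : PrimeSpectrum A, p.asIdeal ∈ minimalPrimes A → p ∈ U) :
    (⨅ a : _root_.ConnectedComponents U, componentIdeal a).radical = nilradical A := by
  refine le_antisymm (Ideal.radical_le_radical_iff.2 ?_) (Ideal.radical_mono bot_le)
  rw [← Ideal.sInf_minimalPrimes]
  exact le_sInf fun p hp ↦ (iInf_le _ _).trans (componentIdeal_mk_le (hU ⟨p, hp.1.1⟩ hp))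

end ComponentIdeal

section Comap

variable {R A : Type*} [CommRing R] [CommRing A] {f : R →+* A}

lemma ringKrullDim_quotient_comap (hf : Function.Surjective f) (J : Ideal A) :
    ringKrullDim (R ⧸ J.comap f) = ringKrullDim (A ⧸ J) :=
  ringKrullDim_eq_of_ringEquiv (RingEquiv.ofBijective (Ideal.quotientMap J f le_rfl)
    ⟨Ideal.quotientMap_injective, Ideal.quotientMap_surjective hf⟩)

lemma comap_le_radical_comap_sup_comap (hf : Function.Surjective f) {J K K' : Ideal A}
    (h : J ≤ (K ⊔ K').radical) : J.comap f ≤ (K.comap f ⊔ K'.comap f).radical := by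
  have hsup : (K ⊔ K').comap f = K.comap f ⊔ K'.comap f := by
    rw [← Ideal.map_comap_of_surjective f hf K, ← Ideal.map_comap_of_surjective f hf K',
      ← Ideal.map_sup, Ideal.comap_map_of_surjective f hf, Ideal.map_comap_of_surjective f hf,
      Ideal.map_comap_of_surjective f hf, sup_eq_left]
    exact (Ideal.comap_mono bot_le).trans le_sup_left
  rw [← hsup, ← Ideal.comap_radical]
  exact Ideal.comap_mono h

end Comap

theorem card_components_le_one_add_sum_lyubeznik_general
    {A : Type*} [CommRing A] [Nontrivial A]
    {R : Type u} [CommRing R] [IsLocalRing R] [IsNoetherianRing R] (hreg : IsRegularLocal R)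
    {n : ℕ} (hn : ringKrullDim R = n) {I : Ideal R} (e : A ≃+* R ⧸ I) {t : ℕ}
    (hA : ∀ p ∈ minimalPrimes A, ((t + 2 : ℕ) : WithBot ℕ∞) ≤ ringKrullDim (A ⧸ p))
    {J : Ideal A} (hJ : ringKrullDim (A ⧸ J) ≤ t) :
    (Nat.card (_root_.ConnectedComponents
        ((zeroLocus (J : Set A))ᶜ : Set (PrimeSpectrum A))) : WithBot ℕ∞) ≤
      1 + ∑ i ∈ Finset.range (t + 1), lyubeznikNumber R I n i (i + 1) := by
  let f : R →+* A := e.symm.toRingHom.comp (Ideal.Quotient.mk I)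
  have hf : Function.Surjective f := e.symm.surjective.comp Ideal.Quotient.mk_surjective
  have hker : (⊥ : Ideal A).comap f = I := by
    ext r
    simp [f, Ideal.Quotient.eq_zero_iff_mem]
  have : IsNoetherianRing A := isNoetherianRing_of_surjective R A f hf
  have hmin (p : PrimeSpectrum A) (hp : p.asIdeal ∈ minimalPrimes A) :
      p ∈ ((zeroLocus (J : Set A))ᶜ : Set (PrimeSpectrum A)) := fun hJp ↦ by
    have hle : t + 2 ≤ t := by
      exact_mod_cast (hA _ hp).trans ((ringKrullDim_quotient_anti hJp).trans hJ)
    omega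
  have : Finite (_root_.ConnectedComponents ↥((zeroLocus (J : Set A))ᶜ)) :=
    finite_connectedComponents _
  obtain ⟨p, hp⟩ := Ideal.nonempty_minimalPrimes (bot_ne_top (α := Ideal A))
  have : Nonempty (_root_.ConnectedComponents ↥((zeroLocus (J : Set A))ᶜ)) :=
    ⟨ConnectedComponents.mk ⟨_, hmin ⟨p, hp.1.1⟩ hp⟩⟩
  refine nat_card_le_one_add_sum_lyubeznikNumber hreg hn
    (𝔮 := fun a ↦ (componentIdeal a).comap f) ((ringKrullDim_quotient_comap hf J).trans_le hJ)
    ?_ (fun a ↦ ?_)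
    (fun a b hab ↦ comap_le_radical_comap_sup_comap hf (le_radical_componentIdeal_sup hab))
  · rw [← Ideal.comap_iInf, ← Ideal.comap_radical, radical_iInf_componentIdeal hmin, ← hker,
      ← Ideal.comap_radical]
    rfl
  · obtain ⟨p, hp, hap⟩ := exists_mem_minimalPrimes_componentIdeal_le hmin a
    exact ⟨p.comap f, Ideal.comap_mono hap, (ringKrullDim_quotient_comap hf p).symm ▸ hA p hp⟩

/-- Let `A` be an equidimensional complete local ring containing a field of
dimension `d ≥ 2`, with separably closed residue field, presented as `A ≅ R/I`
with `R` an `n`-dimensional complete regular local ring containing a field.  For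
all `0 ≤ t ≤ d - 2` and all closed `X = V(J) ⊆ Spec A` with `dim X ≤ t`, the
number of connected components of `Spec A \ X` is at most
`1 + Σ_{i=0}^{t} λ_{i,i+1}(A)`. -/
theorem card_components_le_one_add_sum_lyubeznik
    (A : Type u) [CommRing A] [IsLocalRing A] [IsNoetherianRing A]
    [IsAdicComplete (IsLocalRing.maximalIdeal A) A]
    (hAfield : ContainsField A) [IsSepClosed (ResidueField A)]
    (hAequi : ∀ p ∈ minimalPrimes A, ringKrullDim (A ⧸ p) = ringKrullDim A)
    (R : Type u) [CommRing R] [IsLocalRing R] [IsNoetherianRing R]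
    [IsAdicComplete (IsLocalRing.maximalIdeal R) R]
    (hRfield : ContainsField R) (hreg : IsRegularLocal R)
    (n : ℕ) (hn : ringKrullDim R = (n : ℕ))
    (I : Ideal R) (e : A ≃+* R ⧸ I)
    (d : ℕ) (hd : 2 ≤ d) (hdimA : ringKrullDim A = (d : ℕ))
    (t : ℕ) (htd : t ≤ d - 2) :
    ∀ J : Ideal A, ringKrullDim (A ⧸ J) ≤ ((t : ℕ) : WithBot ℕ∞) →
      ((Nat.card (_root_.ConnectedComponents
          ((PrimeSpectrum.zeroLocus (J : Set A))ᶜ : Set (PrimeSpectrum A))) : ℕ) : WithBot ℕ∞) ≤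
        1 + ∑ i ∈ Finset.range (t + 1), lyubeznikNumber R I n i (i + 1) := by
  intro J hJ
  have hA (p) (hp : p ∈ minimalPrimes A) : ((t + 2 : ℕ) : WithBot ℕ∞) ≤ ringKrullDim (A ⧸ p) := by
    rw [hAequi p hp, hdimA]
    exact_mod_cast (by omega : t + 2 ≤ d)
  exact card_components_le_one_add_sum_lyubeznik_general hreg hn e hA hJ
end
end

section
/- Let A be an equidimensional complete local ring containing a field, with separably closed residue field. Then c(A) ≥ depth(A) − 1, where c(A) is the connectedness dimension. -/
open IsLocalRing PrimeSpectrum CategoryTheory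

noncomputable section

universe u

/-- The depth of a local ring `A`: the least `j` such that `Ext^j_A(k, A) ≠ 0`
(as an element of `ℕ∞`, so `⊤` if no such `j` exists). -/
noncomputable def localDepth (A : Type u) [CommRing A] [IsLocalRing A] : ℕ∞ :=
  sInf {m : ℕ∞ | ∃ j : ℕ, m = j ∧
    ¬ Subsingleton (((_root_.Ext A (ModuleCat.{u} A) j).obj
      (Opposite.op (ModuleCat.of A (ResidueField A)))).obj (ModuleCat.of A A))}

open Pointwise RingTheory.Sequence

universe w

/-! An associated prime `p` of a finite module of depth at least `n` satisfies `n ≤ dim A ⧸ p`, so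
by prime avoidance an ideal `J` with `dim A ⧸ J + 2 ≤ depth A` contains a weakly regular sequence
`a, b`. Following Hartshorne, suppose that `Spec A \ V(J)` is disconnected: then there are nonzero
ideals `P` and `Q` with `P * Q = 0` whose sum contains powers of `a` and `b`, which again form a
weakly regular sequence. Writing such a power of `a` as `p + q` with `p ∈ P` and `q ∈ Q`, the
fraction `p / (p + q)` turns out to be an idempotent of `A`, hence `0` or `1` as `A` is local. So
`P` or `Q` contains a nonzerodivisor, and the other one vanishes. -/

lemma subsingleton_abelianExt_of_subsingleton_ext {R : Type*} [Ring R] {C : Type*} [Category* C]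
    [Abelian C] [Linear R C] [EnoughProjectives C] [HasExt.{w} C] {X Y : C} {i : ℕ}
    (h : Subsingleton (((_root_.Ext R C i).obj (Opposite.op X)).obj Y)) :
    Subsingleton (Abelian.Ext X Y i) := by
  let P := projectiveResolution X
  have hzero : Limits.IsZero ((P.complex.linearYonedaObj R Y).homology i) :=
    .of_iso (ModuleCat.isZero_of_subsingleton _) (P.isoExt i Y).symm
  rw [← HomologicalComplex.exactAt_iff_isZero_homology,
    HomologicalComplex.exactAt_iff' _ (i - 1) i (i + 1) (by cases i <;> simp) (by simp),
    ShortComplex.moduleCat_exact_iff] at hzero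
  refine subsingleton_of_forall_eq 0 fun α ↦ ?_
  obtain ⟨f, hf, rfl⟩ := P.extMk_surjective α (i + 1) rfl
  obtain ⟨g, hg⟩ : ∃ g : P.complex.X (i - 1) ⟶ Y, P.complex.d i (i - 1) ≫ g = f := hzero f hf
  cases i with
  | zero =>
    have hf0 : f = 0 := by rw [← hg, P.complex.shape _ _ (by simp), Limits.zero_comp]
    simp only [hf0, P.extMk_zero]
  | succ i => exact (P.extMk_eq_zero_iff f (i + 2) rfl hf i rfl).2 ⟨g, hg⟩

lemma subsingleton_ext_of_shortExact {C : Type*} [Category* C] [Abelian C] [HasExt.{w} C]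
    {S : ShortComplex C} (hS : S.ShortExact) {X : C} {i : ℕ}
    (h₂ : Subsingleton (Abelian.Ext X S.X₂ i)) (h₁ : Subsingleton (Abelian.Ext X S.X₁ (i + 1))) :
    Subsingleton (Abelian.Ext X S.X₃ i) := by
  refine subsingleton_of_forall_eq 0 fun γ ↦ ?_
  obtain ⟨β, rfl⟩ := Abelian.Ext.covariant_sequence_exact₃ X hS γ rfl (h₁.elim _ _)
  rw [h₂.elim β 0, Abelian.Ext.zero_comp]

/-- `depth M ≥ n` for a module `M` over a local ring, expressed as in `localDepth` by the vanishing
of `Ext^i(k, M)` for `i < n`. Mathlib's `Abelian.Ext` replaces the derived functor `Ext` because it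
comes with the long exact sequence in `M`. -/
def HasDepthGE (A : Type u) [CommRing A] [IsLocalRing A] (M : Type u) [AddCommGroup M] [Module A M]
    (n : ℕ) : Prop :=
  ∀ i < n, Subsingleton (Abelian.Ext (ModuleCat.of A (ResidueField A)) (ModuleCat.of A M) i)

section AssociatedPrimes

variable {A : Type*} [CommRing A]

lemma ringKrullDim_quotient_add_one_le_of_lt {p q : Ideal A} [p.IsPrime] (hpq : p < q) :
    ringKrullDim (A ⧸ q) + 1 ≤ ringKrullDim (A ⧸ p) := by
  obtain ⟨x, hxq, hxp⟩ := SetLike.exists_of_lt hpq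
  refine ringKrullDim_succ_le_of_surjective (Ideal.Quotient.factor hpq.le)
    (Ideal.Quotient.factor_surjective hpq.le) (r := Ideal.Quotient.mk p x)
    (mem_nonZeroDivisors_of_ne_zero ?_) ?_
  · rwa [Ne, Ideal.Quotient.eq_zero_iff_mem]
  · rwa [Ideal.Quotient.factor_mk, Ideal.Quotient.eq_zero_iff_mem]

variable [IsNoetherianRing A] {M : Type*} [AddCommGroup M] [Module A M]

lemma exists_ne_zero_forall_smul_eq_zero_of_isAssociatedPrime {p : Ideal A}
    (hp : IsAssociatedPrime p M) : ∃ y : M, y ≠ 0 ∧ ∀ a ∈ p, a • y = 0 := by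
  obtain ⟨hprime, y, hy⟩ := isAssociatedPrime_iff.mp hp
  refine ⟨y, ?_, fun a ha ↦ ?_⟩
  · rintro rfl
    exact hprime.ne_top (by simp [hy])
  · rwa [hy, Submodule.mem_colon_singleton, Submodule.mem_bot] at ha

lemma notMem_of_isAssociatedPrime_of_isSMulRegular {p : Ideal A} (hp : IsAssociatedPrime p M)
    {x : A} (hx : IsSMulRegular M x) : x ∉ p := by
  intro hxp
  have hmem : x ∈ ⋃ p ∈ associatedPrimes A M, (p : Set A) := Set.mem_biUnion hp hxp
  rw [biUnion_associatedPrimes_eq_compl_regular] at hmem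
  exact hmem hx

variable [Module.Finite A M]

lemma exists_isAssociatedPrime_ge_of_forall_not_isSMulRegular {J : Ideal A}
    (hJ : ∀ a ∈ J, ¬ IsSMulRegular M a) : ∃ p, IsAssociatedPrime p M ∧ J ≤ p := by
  refine (J.subset_union_prime_finite (associatedPrimes.finite A M) (f := id) 0 0
    fun _ hp _ _ ↦ hp.isPrime).1 ?_
  simp_rw [id, biUnion_associatedPrimes_eq_compl_regular]
  exact hJ

-- Nakayama's lemma, applied to the submodule killed by `p`
lemma exists_notMem_smul_top_of_isAssociatedPrime {p : Ideal A} (hp : IsAssociatedPrime p M)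
    {x : A} (hx : IsSMulRegular M x) (hxJ : x ∈ Ring.jacobson A) :
    ∃ z : M, (∀ a ∈ p, a • z = 0) ∧ z ∉ x • (⊤ : Submodule A M) := by
  by_contra! hcon
  have hle : Submodule.torsionBySet A M p ≤ Ideal.span {x} • Submodule.torsionBySet A M p := by
    intro w hw
    have hpw : ∀ a ∈ p, a • w = 0 := fun a ha ↦ (Submodule.mem_torsionBySet_iff _ _).1 hw ⟨a, ha⟩
    obtain ⟨v, -, rfl⟩ := (Submodule.mem_smul_pointwise_iff_exists _ _ _).1 (hcon w hpw)
    refine Submodule.smul_mem_smul (Ideal.mem_span_singleton_self x)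
      ((Submodule.mem_torsionBySet_iff _ _).2 fun a ↦ hx.right_eq_zero_of_smul ?_)
    rw [smul_comm]
    exact hpw a a.2
  have hbot : Submodule.torsionBySet A M p = ⊥ :=
    Submodule.eq_bot_of_le_smul_of_le_jacobson_bot _ _ (IsNoetherian.noetherian _) hle <| by
      rwa [Ideal.span_singleton_le_iff_mem, Ideal.jacobson_bot]
  obtain ⟨y, hy, hpy⟩ := exists_ne_zero_forall_smul_eq_zero_of_isAssociatedPrime hp
  refine hy ((Submodule.mem_bot A).1 (hbot ▸ ?_))
  exact (Submodule.mem_torsionBySet_iff _ _).2 fun a ↦ hpy a a.2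

lemma exists_isAssociatedPrime_quotSMulTop_gt {p : Ideal A} (hp : IsAssociatedPrime p M)
    {x : A} (hx : IsSMulRegular M x) (hxJ : x ∈ Ring.jacobson A) :
    ∃ q, IsAssociatedPrime q (QuotSMulTop x M) ∧ p < q := by
  obtain ⟨z, hpz, hz⟩ := exists_notMem_smul_top_of_isAssociatedPrime hp hx hxJ
  obtain ⟨q, hq, hle⟩ := exists_le_isAssociatedPrime_of_isNoetherianRing A
    (Submodule.Quotient.mk z : QuotSMulTop x M) (by rwa [Ne, Submodule.Quotient.mk_eq_zero])
  have hmem : ∀ a, a • z ∈ x • (⊤ : Submodule A M) → a ∈ q := fun a ha ↦ hle <| by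
    rwa [Submodule.mem_colon_singleton, Submodule.mem_bot, ← Submodule.Quotient.mk_smul,
      Submodule.Quotient.mk_eq_zero]
  refine ⟨q, hq, SetLike.lt_iff_le_and_exists.2 ⟨fun a ha ↦ hmem a ?_, x, hmem x ?_,
    notMem_of_isAssociatedPrime_of_isSMulRegular hp hx⟩⟩
  · rw [hpz a ha]
    exact zero_mem _
  · exact Submodule.smul_mem_pointwise_smul _ _ _ trivial

end AssociatedPrimes

namespace HasDepthGE

variable {A : Type u} [CommRing A] [IsLocalRing A] {M : Type u} [AddCommGroup M] [Module A M]
  {n : ℕ}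

lemma of_le_localDepth (hn : n ≤ localDepth A) : HasDepthGE A A n := by
  intro i hi
  apply subsingleton_abelianExt_of_subsingleton_ext (R := A)
  by_contra hne
  have hle : localDepth A ≤ i := sInf_le ⟨i, rfl, hne⟩
  exact hi.not_ge (Nat.cast_le.1 (hn.trans hle))

lemma quotSMulTop (h : HasDepthGE A M n) {x : A} (hx : IsSMulRegular M x) :
    HasDepthGE A (QuotSMulTop x M) (n - 1) := fun i hi ↦
  subsingleton_ext_of_shortExact
    (IsSMulRegular.smulShortComplex_shortExact (M := ModuleCat.of A M) hx)
    (h i (by omega)) (h (i + 1) (by omega))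

variable [IsNoetherianRing A] [Module.Finite A M]

lemma exists_isSMulRegular_mem_maximalIdeal (h : HasDepthGE A M (n + 1)) :
    ∃ x ∈ maximalIdeal A, IsSMulRegular M x := by
  have hext := h 0 n.succ_pos
  have hhom : Subsingleton (ResidueField A →ₗ[A] M) :=
    ((Abelian.Ext.addEquiv₀ (X := ModuleCat.of A (ResidueField A))
      (Y := ModuleCat.of A M)).trans ModuleCat.homAddEquiv).symm.subsingleton
  obtain ⟨x, hxann, hx⟩ := IsSMulRegular.subsingleton_linearMap_iff.1 hhom
  refine ⟨x, ?_, hx⟩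
  rwa [← Ideal.annihilator_quotient (I := maximalIdeal A)]

lemma le_ringKrullDim_quotient_of_isAssociatedPrime (h : HasDepthGE A M n) {p : Ideal A}
    (hp : IsAssociatedPrime p M) : n ≤ ringKrullDim (A ⧸ p) := by
  have := hp.isPrime
  induction n generalizing M p with
  | zero => exact ringKrullDim_nonneg_of_nontrivial
  | succ n ih =>
    obtain ⟨x, hxm, hx⟩ := h.exists_isSMulRegular_mem_maximalIdeal
    obtain ⟨q, hq, hpq⟩ := exists_isAssociatedPrime_quotSMulTop_gt hp hx
      (by rwa [IsLocalRing.ringJacobson_eq_maximalIdeal])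
    calc ((n + 1 : ℕ) : WithBot ℕ∞) = n + 1 := by push_cast; rfl
      _ ≤ ringKrullDim (A ⧸ q) + 1 := by gcongr; exact ih (h.quotSMulTop hx) hq hq.isPrime
      _ ≤ ringKrullDim (A ⧸ p) := ringKrullDim_quotient_add_one_le_of_lt hpq

lemma exists_isSMulRegular_mem (h : HasDepthGE A M n) {J : Ideal A}
    (hJ : ringKrullDim (A ⧸ J) < n) : ∃ a ∈ J, IsSMulRegular M a := by
  by_contra! hcon
  obtain ⟨p, hp, hJp⟩ := exists_isAssociatedPrime_ge_of_forall_not_isSMulRegular hcon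
  have hdim : ringKrullDim (A ⧸ p) ≤ ringKrullDim (A ⧸ J) :=
    ringKrullDim_le_of_surjective _ (Ideal.Quotient.factor_surjective hJp)
  exact hJ.not_ge ((h.le_ringKrullDim_quotient_of_isAssociatedPrime hp).trans hdim)

lemma exists_isWeaklyRegular (h : HasDepthGE A M n) {J : Ideal A} (k : ℕ)
    (hk : ringKrullDim (A ⧸ J) + k ≤ n) :
    ∃ rs : List A, rs.length = k ∧ (∀ r ∈ rs, r ∈ J) ∧ IsWeaklyRegular M rs := by
  induction k generalizing M n with
  | zero => exact ⟨[], rfl, by simp, .nil A M⟩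
  | succ k ih =>
    rw [Nat.cast_add_one, ← add_assoc] at hk
    have hlt : ringKrullDim (A ⧸ J) < n :=
      (le_add_of_nonneg_right k.cast_nonneg).trans_lt (ENat.WithBot.add_one_le_natCast_iff.1 hk)
    have hk' : ringKrullDim (A ⧸ J) + k ≤ (n - 1 : ℕ) := by
      cases n with
      | zero => simp [(ENat.WithBot.add_one_le_zero_iff _).1 hk]
      | succ n => exact ENat.WithBot.add_le_add_one_right_iff.1 hk
    obtain ⟨a, haJ, ha⟩ := h.exists_isSMulRegular_mem hlt
    obtain ⟨rs, hlen, hrsJ, hrs⟩ := ih (h.quotSMulTop ha) hk'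
    exact ⟨a :: rs, by rw [List.length_cons, hlen], List.forall_mem_cons.2 ⟨haJ, hrsJ⟩,
      .cons ha hrs⟩

end HasDepthGE

section RegularPair

variable {A : Type*} [CommRing A]

lemma isSMulRegular_quotSMulTop_iff {M : Type*} [AddCommGroup M] [Module A M] {a b : A} :
    IsSMulRegular (QuotSMulTop a M) b ↔ ∀ x y : M, b • x = a • y → ∃ z, x = a • z := by
  simp only [QuotSMulTop, isSMulRegular_quotient_iff_mem_of_smul_mem,
    Submodule.mem_smul_pointwise_iff_exists, Submodule.mem_top, true_and, forall_exists_index]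
  grind

lemma isSMulRegular_quotSMulTop_pow {M : Type*} [AddCommGroup M] [Module A M] {a b : A}
    (ha : IsSMulRegular M a) (hb : IsSMulRegular (QuotSMulTop a M) b) (n : ℕ) :
    IsSMulRegular (QuotSMulTop (a ^ n) M) b := by
  rw [isSMulRegular_quotSMulTop_iff] at hb ⊢
  induction n with
  | zero => exact fun x _ _ ↦ ⟨x, by simp⟩
  | succ n ih =>
    intro x y hxy
    obtain ⟨x, rfl⟩ := hb x (a ^ n • y) (by rw [hxy, pow_succ', mul_smul])
    obtain ⟨z, rfl⟩ := ih x y (ha <| by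
      change a • b • x = a • a ^ n • y
      rw [smul_comm, hxy, pow_succ', mul_smul])
    exact ⟨z, by rw [pow_succ', mul_smul]⟩

lemma eq_bot_of_isSMulRegular_of_mul_eq_bot {P Q : Ideal A} (hPQ : P * Q = ⊥) {a : A}
    (haP : a ∈ P) (ha : IsSMulRegular A a) : Q = ⊥ :=
  eq_bot_iff.2 fun q hq ↦ ha.right_eq_zero_of_smul <| by
    simpa [hPQ] using Ideal.mul_mem_mul haP hq

lemma eq_zero_or_eq_one_of_isIdempotentElem [IsLocalRing A] {e : A} (he : IsIdempotentElem e) :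
    e = 0 ∨ e = 1 := by
  have hmul : e * (1 - e) = 0 := he.mul_one_sub_self
  rcases IsLocalRing.isUnit_or_isUnit_one_sub_self e with hu | hu
  · exact .inr (sub_eq_zero.1 (hu.mul_right_eq_zero.1 hmul)).symm
  · exact .inl (hu.mul_left_eq_zero.1 hmul)

lemma eq_bot_or_eq_bot_of_mul_eq_bot [IsLocalRing A] {P Q : Ideal A} (hPQ : P * Q = ⊥) {a b : A}
    (haPQ : a ∈ P ⊔ Q) (hbPQ : b ∈ P ⊔ Q) (ha : IsSMulRegular A a)
    (hb : IsSMulRegular (QuotSMulTop a A) b) : P = ⊥ ∨ Q = ⊥ := by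
  have hmul : ∀ p ∈ P, ∀ q ∈ Q, p * q = 0 := fun p hp q hq ↦ by
    simpa [hPQ] using Ideal.mul_mem_mul hp hq
  obtain ⟨p, hp, q, hq, rfl⟩ := Submodule.mem_sup.1 haPQ
  obtain ⟨p', hp', q', hq', rfl⟩ := Submodule.mem_sup.1 hbPQ
  obtain ⟨e, he⟩ : ∃ e, p = (p + q) * e := isSMulRegular_quotSMulTop_iff.1 hb p p' <| by
    simp only [smul_eq_mul]
    linear_combination hmul p hp q' hq' - hmul p' hp' q hq
  have hidem : IsIdempotentElem e := by
    refine (ha.pow 2) ?_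
    simp only [smul_eq_mul]
    linear_combination ((p + q) - (p + (p + q) * e)) * he - hmul p hp q hq
  rcases eq_zero_or_eq_one_of_isIdempotentElem hidem with rfl | rfl
  · rw [mul_zero] at he
    subst he
    exact .inl (eq_bot_of_isSMulRegular_of_mul_eq_bot (mul_comm P Q ▸ hPQ) (by simpa using hq) ha)
  · have hq0 : q = 0 := by linear_combination -he
    subst hq0
    exact .inr (eq_bot_of_isSMulRegular_of_mul_eq_bot hPQ (by simpa using hp) ha)

end RegularPair

section Connectedness

variable {A : Type*} [CommRing A]

lemma nonempty_compl_zeroLocus_of_isSMulRegular [Nontrivial A] {J : Ideal A} {a : A} (haJ : a ∈ J)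
    (ha : IsSMulRegular A a) : ((zeroLocus (J : Set A))ᶜ).Nonempty := by
  rw [Set.nonempty_compl, Ne, zeroLocus_eq_univ_iff]
  intro hJ
  obtain ⟨n, hn⟩ := mem_nilradical.1 (hJ haJ)
  exact one_ne_zero ((ha.pow n).right_eq_zero_of_smul (x := (1 : A)) (by simp [hn]))

variable [IsNoetherianRing A]

lemma exists_pow_mul_pow_eq_bot {P Q : Ideal A} (hPQ : P * Q ≤ nilradical A) :
    ∃ n ≠ 0, P ^ n * Q ^ n = ⊥ := by
  obtain ⟨n, hn⟩ := Ideal.exists_pow_le_of_le_radical_of_fg hPQ (IsNoetherian.noetherian _)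
  refine ⟨n + 1, n.succ_ne_zero, ?_⟩
  rw [← mul_pow, eq_bot_iff]
  exact (Ideal.pow_le_pow_right n.le_succ).trans hn

lemma exists_ideal_mul_eq_bot_of_not_isPreconnected {U : Set (PrimeSpectrum A)} (hU : IsOpen U)
    (hconn : ¬ _root_.IsPreconnected U) :
    ∃ P Q : Ideal A, P * Q = ⊥ ∧ P ≠ ⊥ ∧ Q ≠ ⊥ ∧
      zeroLocus ((P ⊔ Q : Ideal A) : Set A) = Uᶜ := by
  simp only [_root_.IsPreconnected, not_forall, Set.not_nonempty_iff_eq_empty] at hconn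
  obtain ⟨u, v, hu, hv, huv, hUu, hUv, hdisj⟩ := hconn
  obtain ⟨P, hP⟩ := (isClosed_iff_zeroLocus_ideal _).1 (hU.inter hu).isClosed_compl
  obtain ⟨Q, hQ⟩ := (isClosed_iff_zeroLocus_ideal _).1 (hU.inter hv).isClosed_compl
  have hnil : P * Q ≤ nilradical A := by
    rw [nilradical, ← zeroLocus_subset_zeroLocus_iff, zeroLocus_mul, ← hP, ← hQ,
      ← Set.compl_inter, ← Set.inter_inter_distrib_left, hdisj, Set.compl_empty]
    exact Set.subset_univ _
  obtain ⟨n, hn, hPQ⟩ := exists_pow_mul_pow_eq_bot hnil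
  have pow_ne_bot : ∀ {I : Ideal A} {s : Set (PrimeSpectrum A)}, s.Nonempty →
      sᶜ = zeroLocus (I : Set A) → I ^ n ≠ ⊥ := by
    intro I s hs hI hbot
    rw [← zeroLocus_pow I hn, hbot, zeroLocus_bot, Set.compl_univ_iff] at hI
    exact hs.ne_empty hI
  refine ⟨P ^ n, Q ^ n, hPQ, pow_ne_bot hUu hP, pow_ne_bot hUv hQ, ?_⟩
  rw [zeroLocus_sup, zeroLocus_pow P hn, zeroLocus_pow Q hn, ← hP, ← hQ, ← Set.compl_union,
    ← Set.inter_union_distrib_left, Set.inter_eq_left.2 huv]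

theorem isConnected_compl_zeroLocus_of_isWeaklyRegular [IsLocalRing A] {J : Ideal A} {a b : A}
    (haJ : a ∈ J) (hbJ : b ∈ J) (hab : IsWeaklyRegular A [a, b]) :
    IsConnected (zeroLocus (J : Set A))ᶜ := by
  obtain ⟨ha, hb⟩ : IsSMulRegular A a ∧ IsSMulRegular (QuotSMulTop a A) b := by
    simpa [isWeaklyRegular_cons_iff] using hab
  refine ⟨nonempty_compl_zeroLocus_of_isSMulRegular haJ ha, ?_⟩
  by_contra hconn
  obtain ⟨P, Q, hPQ, hP, hQ, hlocus⟩ := exists_ideal_mul_eq_bot_of_not_isPreconnected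
    (isClosed_zeroLocus _).isOpen_compl hconn
  have hJ : J ≤ (P ⊔ Q).radical := by
    rw [← zeroLocus_subset_zeroLocus_iff, hlocus, compl_compl]
  obtain ⟨m, ham⟩ := hJ haJ
  obtain ⟨n, hbn⟩ := hJ hbJ
  rcases eq_bot_or_eq_bot_of_mul_eq_bot hPQ ham hbn (ha.pow m)
    ((isSMulRegular_quotSMulTop_pow ha hb m).pow n) with h | h
  · exact hP h
  · exact hQ h

end Connectedness

theorem HasDepthGE.isConnected_compl_zeroLocus {A : Type u} [CommRing A] [IsLocalRing A]
    [IsNoetherianRing A] {n : ℕ} (h : HasDepthGE A A n) {J : Ideal A}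
    (hJ : ringKrullDim (A ⧸ J) + 2 ≤ n) : IsConnected (zeroLocus (J : Set A))ᶜ := by
  obtain ⟨rs, hlen, hrsJ, hrs⟩ := h.exists_isWeaklyRegular 2 hJ
  obtain ⟨a, b, rfl⟩ := List.length_eq_two.1 hlen
  exact isConnected_compl_zeroLocus_of_isWeaklyRegular (hrsJ a (by simp)) (hrsJ b (by simp)) hrs

lemma exists_ringKrullDim_quotient_eq_connDim (A : Type*) [CommRing A] :
    ∃ J : Ideal A, ringKrullDim (A ⧸ J) = connDim A ∧ ¬ IsConnected (zeroLocus (J : Set A))ᶜ :=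
  csInf_mem (s := {d | ∃ J : Ideal A, ringKrullDim (A ⧸ J) = d ∧
    ¬ IsConnected (zeroLocus (J : Set A))ᶜ})
    ⟨_, ⊥, rfl, fun h ↦ by simpa using h.nonempty⟩

theorem connDim_ge_depth_sub_one_general (A : Type u) [CommRing A] [IsLocalRing A]
    [IsNoetherianRing A] : (localDepth A : WithBot ℕ∞) ≤ connDim A + 1 := by
  obtain ⟨J, hdim, hconn⟩ := exists_ringKrullDim_quotient_eq_connDim A
  have hle : ∀ n : ℕ, n ≤ localDepth A → n ≤ connDim A + 1 := by
    intro n hn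
    by_contra! hlt
    refine hconn ((HasDepthGE.of_le_localDepth hn).isConnected_compl_zeroLocus ?_)
    rw [hdim, ← one_add_one_eq_two, ← add_assoc]
    exact ENat.WithBot.add_one_le_natCast_iff.2 hlt
  obtain ⟨c, hc⟩ : ∃ c : ℕ∞, c = connDim A + 1 :=
    WithBot.ne_bot_iff_exists.1 (ne_bot_of_le_ne_bot (by simp) (hle 0 (by simp)))
  rw [← hc, WithBot.coe_le_coe, ← ENat.forall_natCast_le_iff_le]
  exact fun n hn ↦ WithBot.coe_le_coe.1 (hc ▸ hle n hn)

/-- Let `A` be an equidimensional complete local ring containing a field, with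
separably closed residue field.  Then `c(A) ≥ depth A - 1`, where `c(A)` is the
connectedness dimension. -/
theorem connDim_ge_depth_sub_one
    (A : Type u) [CommRing A] [IsLocalRing A] [IsNoetherianRing A]
    [IsAdicComplete (IsLocalRing.maximalIdeal A) A]
    (hAfield : ContainsField A) [IsSepClosed (ResidueField A)]
    (hAequi : ∀ p ∈ minimalPrimes A, ringKrullDim (A ⧸ p) = ringKrullDim A) :
    ((localDepth A : WithBot ℕ∞)) ≤ connDim A + 1 :=
  connDim_ge_depth_sub_one_general A
end
end
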